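/- arXiv:1806.06933 — 5 statements merged into one kernel-verified Lean document; each statement's English description precedes it below -/
import Mathlib

section
/- For every ε > 0 there exist an integer n and an atomless distribution F on [0,∞) such that for every measurable set A ⊆ [0,∞) of eligible x-values the following holds: when the agent draws n i.i.d. pairs (x_1,y_1),…,(x_n,y_n) with x_i distributed according to F and y_i uniform on [0,1] independent of everything else, and proposes the sample with maximum y_i among those with x_i ∈ A (proposing nothing if no sample qualifies), the principal's expected utility is less than (1 − 1/e + ε)·E[max_{1≤i≤n} x_i]. -/
open MeasureTheory ProbabilityTheory

/-!
Let the `x`-value be about `b = (e - 2) / (e - 1)` except for a rare tail of probability `δ` near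
`H`, with `n δ → 0` and `n δ H ≈ a = 1 / (e - 1)`, each of the two values being smeared over a short
interval to avoid atoms.  Then `E[max x] ≈ b + a = 1`.  If `A` has probability `p`, a given eligible
sample is proposed exactly when no eligible rival has a larger `y`, which has probability about
`∫₀¹ exp (-s (1 - y)) dy = (1 - exp (-s)) / s` with `s = n p`.  Since `∫_A x dF ≤ b p + δ H`, the
principal gets at most about `(a + b s) (1 - exp (-s)) / s`.  This is at most `1 - 1 / e` for every
`s ≥ 0`, with a double contact at `s = 1`; `a` and `b` are chosen to achieve this.
-/

section RealAnalysis

lemma min_le_of_concaveOn_of_convexOn_of_hasDerivAt_zero {g : ℝ → ℝ} {x c z s : ℝ}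
    (hconc : ConcaveOn ℝ (Set.Icc x c) g) (hconv : ConvexOn ℝ (Set.Ici c) g) (hcz : c < z)
    (hg : HasDerivAt g 0 z) (hs : x ≤ s) : min (g x) (g z) ≤ g s := by
  have hmin : IsMinOn g (Set.Ici c) z :=
    hconv.isMinOn_of_rightDeriv_eq_zero (by simpa using hcz)
      (hg.hasDerivWithinAt.derivWithin (uniqueDiffWithinAt_Ioi z))
  rcases le_total c s with hcs | hsc
  · exact (min_le_right _ _).trans (hmin hcs)
  · have hxc : x ≤ c := hs.trans hsc
    exact (min_le_min_left _ (hmin Set.self_mem_Ici)).trans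
      (hconc.min_le_of_mem_Icc (Set.left_mem_Icc.2 hxc) (Set.right_mem_Icc.2 hxc) ⟨hs, hsc⟩)

lemma hasDerivAt_affine_mul_exp_one_sub (p q s : ℝ) :
    HasDerivAt (fun s => (p + q * s) * Real.exp (1 - s))
      ((q - p + -q * s) * Real.exp (1 - s)) s := by
  have haff : HasDerivAt (fun s : ℝ => p + q * s) (q * 1) s :=
    ((hasDerivAt_id s).const_mul q).const_add p
  have hexp : HasDerivAt (fun s : ℝ => Real.exp (1 - s)) (Real.exp (1 - s) * -1) s :=
    ((hasDerivAt_id s).const_sub 1).exp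
  exact (haff.mul hexp).congr_deriv (by ring)

/-- With `c = e - 2` both sides agree at `s = 0` and touch to first order at `s = 1`. -/
lemma sub_le_affine_mul_exp_one_sub {c s : ℝ} (hc : 1 / 2 ≤ c) (hce : c ≤ Real.exp 1 - 2)
    (hs : 0 ≤ s) : c + 2 - s ≤ (1 + c * s) * Real.exp (1 - s) := by
  let g : ℝ → ℝ := fun s => (1 + c * s) * Real.exp (1 - s) + s
  let g' : ℝ → ℝ := fun s => (c - 1 + -c * s) * Real.exp (1 - s) + 1
  let g'' : ℝ → ℝ := fun s => (-c - (c - 1) + - -c * s) * Real.exp (1 - s)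
  have hg (s : ℝ) : HasDerivAt g (g' s) s :=
    (hasDerivAt_affine_mul_exp_one_sub 1 c s).add (hasDerivAt_id s)
  have hg' (s : ℝ) : HasDerivAt g' (g'' s) s :=
    (hasDerivAt_affine_mul_exp_one_sub (c - 1) (-c) s).add_const 1
  have hcont : Continuous g := continuous_iff_continuousAt.2 fun s => (hg s).continuousAt
  have hc0 : 0 < c := by linarith
  have hc1 : c < 1 := by linarith [Real.exp_one_lt_d9]
  let inflection : ℝ := (2 * c - 1) / c
  have hconc : ConcaveOn ℝ (Set.Icc 0 inflection) g := by
    refine concaveOn_of_hasDerivWithinAt2_nonpos (convex_Icc _ _) hcont.continuousOn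
      (fun x _ => (hg x).hasDerivWithinAt) (fun x _ => (hg' x).hasDerivWithinAt) fun x hx => ?_
    rw [interior_Icc] at hx
    have hlt : x * c < 2 * c - 1 := (lt_div_iff₀ hc0).1 hx.2
    exact mul_nonpos_of_nonpos_of_nonneg (by linarith) (Real.exp_pos _).le
  have hconv : ConvexOn ℝ (Set.Ici inflection) g := by
    refine convexOn_of_hasDerivWithinAt2_nonneg (convex_Ici _) hcont.continuousOn
      (fun x _ => (hg x).hasDerivWithinAt) (fun x _ => (hg' x).hasDerivWithinAt) fun x hx => ?_
    rw [interior_Ici] at hx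
    have hlt : 2 * c - 1 < x * c := (div_lt_iff₀ hc0).1 hx
    exact mul_nonneg (by linarith) (Real.exp_pos _).le
  have hg0 : c + 2 ≤ g 0 := by simp only [g, mul_zero, add_zero, sub_zero, one_mul]; linarith
  have hg1 : c + 2 = g 1 := by simp only [g, mul_one, sub_self, Real.exp_zero]; ring
  have hg'1 : g' 1 = 0 := by simp only [g', mul_one, sub_self, Real.exp_zero]; ring
  have hmin : min (g 0) (g 1) ≤ g s :=
    min_le_of_concaveOn_of_convexOn_of_hasDerivAt_zero hconc hconv
      (by rw [div_lt_one hc0]; linarith) (hg'1 ▸ hg 1) hs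
  have hle : c + 2 ≤ g s := (le_min hg0 hg1.le).trans hmin
  simp only [g] at hle
  linarith

/-- The probability that a sample with uniform `y` meets no eligible rival of larger `y`, in the
Poisson limit where the number of eligible rivals has mean `s`. -/
noncomputable def unbeatenProb (s : ℝ) : ℝ :=
  ∫ y in (0 : ℝ)..1, Real.exp (-(s * (1 - y)))

lemma unbeatenProb_nonneg (s : ℝ) : 0 ≤ unbeatenProb s :=
  intervalIntegral.integral_nonneg zero_le_one fun _ _ => (Real.exp_pos _).le

lemma unbeatenProb_zero : unbeatenProb 0 = 1 := by simp [unbeatenProb]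

lemma mul_unbeatenProb (s : ℝ) : s * unbeatenProb s = 1 - Real.exp (-s) := by
  have hderiv (y : ℝ) : HasDerivAt (fun y => Real.exp (-(s * (1 - y))))
      (s * Real.exp (-(s * (1 - y)))) y := by
    have hlin : HasDerivAt (fun y : ℝ => -(s * (1 - y))) (-(s * -1)) y :=
      (((hasDerivAt_id y).const_sub 1).const_mul s).neg
    exact hlin.exp.congr_deriv (by ring)
  rw [unbeatenProb, ← intervalIntegral.integral_const_mul,
    intervalIntegral.integral_eq_sub_of_hasDerivAt (fun y _ => hderiv y)
      (Continuous.intervalIntegrable (by fun_prop) _ _)]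
  simp

lemma ofReal_unbeatenProb (s : ℝ) :
    ENNReal.ofReal (unbeatenProb s) =
      ∫⁻ y in Set.Icc (0 : ℝ) 1, ENNReal.ofReal (Real.exp (-(s * (1 - y)))) := by
  rw [unbeatenProb, intervalIntegral.integral_of_le zero_le_one, ← integral_Icc_eq_integral_Ioc]
  exact ofReal_integral_eq_lintegral_ofReal
    (Continuous.continuousOn (by fun_prop)).integrableOn_Icc
    (Filter.Eventually.of_forall fun _ => (Real.exp_pos _).le)

/-- The `x`-value `(e - 2) / (e - 1)` of a typical sample of the extremal distribution. -/
noncomputable def bulkValue : ℝ := (Real.exp 1 - 2) / (Real.exp 1 - 1)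

/-- The contribution `1 / (e - 1)` of the rare large samples of the extremal distribution to the
expected maximum. -/
noncomputable def tailMean : ℝ := 1 / (Real.exp 1 - 1)

lemma bulkValue_pos : 0 < bulkValue :=
  div_pos (by linarith [Real.exp_one_gt_d9]) (by linarith [Real.exp_one_gt_d9])

lemma bulkValue_le_tailMean : bulkValue ≤ tailMean :=
  div_le_div_of_nonneg_right (by linarith [Real.exp_one_lt_d9])
    (by linarith [Real.exp_one_gt_d9])

lemma tailMean_pos : 0 < tailMean := bulkValue_pos.trans_le bulkValue_le_tailMean

lemma tailMean_add_bulkValue : tailMean + bulkValue = 1 := by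
  have hne : Real.exp 1 - 1 ≠ 0 := by linarith [Real.exp_one_gt_d9]
  rw [tailMean, bulkValue, ← add_div, div_eq_one_iff_eq hne]
  ring

lemma tailMean_add_bulkValue_mul_unbeatenProb_le {s : ℝ} (hs : 0 ≤ s) :
    (tailMean + bulkValue * s) * unbeatenProb s ≤ 1 - 1 / Real.exp 1 := by
  have he : 2.7 < Real.exp 1 := by linarith [Real.exp_one_gt_d9]
  have hpos : 0 < Real.exp 1 * (Real.exp 1 - 1) := by nlinarith
  have hlhs : (tailMean + bulkValue * s) * unbeatenProb s =
      Real.exp 1 * ((1 + (Real.exp 1 - 2) * s) * unbeatenProb s) /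
        (Real.exp 1 * (Real.exp 1 - 1)) := by
    rw [tailMean, bulkValue, mul_div_mul_left _ _ (Real.exp_pos 1).ne']
    ring
  have hrhs : 1 - 1 / Real.exp 1 =
      (Real.exp 1 - 1) ^ 2 / (Real.exp 1 * (Real.exp 1 - 1)) := by
    have hne : Real.exp 1 - 1 ≠ 0 := by linarith
    field_simp
  rw [hlhs, hrhs, div_le_div_iff_of_pos_right hpos]
  rcases hs.eq_or_lt with rfl | hs
  · rw [unbeatenProb_zero]
    nlinarith
  · have hexp : Real.exp 1 * Real.exp (-s) = Real.exp (1 - s) := by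
      rw [← Real.exp_add, sub_eq_add_neg]
    have hkey := sub_le_affine_mul_exp_one_sub (by linarith) le_rfl hs.le
    refine le_of_mul_le_mul_left ?_ hs
    calc s * (Real.exp 1 * ((1 + (Real.exp 1 - 2) * s) * unbeatenProb s))
        = (1 + (Real.exp 1 - 2) * s) * (Real.exp 1 * (s * unbeatenProb s)) := by ring
      _ = (1 + (Real.exp 1 - 2) * s) * (Real.exp 1 - Real.exp (1 - s)) := by
          rw [mul_unbeatenProb, mul_sub, mul_one, hexp]
      _ ≤ s * (Real.exp 1 - 1) ^ 2 := by linarith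

lemma one_sub_pow_le_one_div_one_add_mul {δ : ℝ} (h0 : 0 ≤ δ) (h1 : δ ≤ 1) (n : ℕ) :
    (1 - δ) ^ n ≤ 1 / (1 + n * δ) := by
  have hpos : 0 < 1 + n * δ := by positivity
  calc (1 - δ) ^ n ≤ Real.exp (-δ) ^ n :=
        pow_le_pow_left₀ (sub_nonneg.2 h1) (Real.one_sub_le_exp_neg δ) n
    _ = 1 / Real.exp (n * δ) := by
        rw [← Real.exp_nat_mul, mul_neg, Real.exp_neg, one_div]
    _ ≤ 1 / (1 + n * δ) :=
        one_div_le_one_div_of_le hpos (by linarith [Real.add_one_le_exp (n * δ)])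

lemma exists_pos_one_add_inv_mul_lt (c : ℝ) {ε : ℝ} (hε : 0 < ε) :
    ∃ m : ℕ, 0 < m ∧
      (1 + 1 / (m : ℝ)) * c < (c + ε) * ((1 - 1 / (m : ℝ)) / (1 + 1 / (m : ℝ))) := by
  have hleft : ContinuousAt (fun x : ℝ => (1 + x) * c) 0 := by fun_prop
  have hright : ContinuousAt (fun x : ℝ => (c + ε) * ((1 - x) / (1 + x))) 0 :=
    ContinuousAt.mul (by fun_prop) (ContinuousAt.div (by fun_prop) (by fun_prop) (by norm_num))
  have hlt : ∀ᶠ x in nhds (0 : ℝ), (1 + x) * c < (c + ε) * ((1 - x) / (1 + x)) :=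
    hleft.eventually_lt hright (by simpa using hε)
  have hev := (tendsto_one_div_atTop_nhds_zero_nat (𝕜 := ℝ)).eventually hlt
  exact ((Filter.eventually_gt_atTop 0).and hev).exists

end RealAnalysis

section ProductMeasure

lemma setLIntegral_pi_forall_succAbove {γ : Type*} [MeasurableSpace γ] (μ : Measure γ)
    [SigmaFinite μ] {m : ℕ} (i : Fin (m + 1)) {h : γ → ENNReal} (hh : Measurable h)
    {S : γ → Set γ} (hS : MeasurableSet {p : γ × γ | p.2 ∈ S p.1}) :
    ∫⁻ v in {v | ∀ j, v (i.succAbove j) ∈ S (v i)}, h (v i) ∂(Measure.pi fun _ => μ) =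
      ∫⁻ z, h z * μ (S z) ^ m ∂μ := by
  let Q : Set (γ × (Fin m → γ)) := {p | ∀ j, p.2 j ∈ S p.1}
  have hQ : MeasurableSet Q := by
    simp only [Q, Set.ofPred_forall]
    exact MeasurableSet.iInter fun j =>
      measurableSet_preimage (f := fun p : γ × (Fin m → γ) => (p.1, p.2 j)) (by fun_prop) hS
  have hslice (z : γ) : Prod.mk z ⁻¹' Q = Set.univ.pi fun _ => S z := by
    ext w; simp [Q]
  have hhQ : Measurable (Q.indicator fun p => h p.1) := (hh.comp measurable_fst).indicator hQ
  calc ∫⁻ v in {v | ∀ j, v (i.succAbove j) ∈ S (v i)}, h (v i) ∂(Measure.pi fun _ => μ)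
      = ∫⁻ p in Q, h p.1 ∂(μ.prod (Measure.pi fun _ => μ)) :=
        (measurePreserving_piFinSuccAbove (fun _ => μ) i).setLIntegral_comp_preimage hQ
          (hh.comp measurable_fst)
    _ = ∫⁻ z, ∫⁻ w, Q.indicator (fun p => h p.1) (z, w) ∂(Measure.pi fun _ => μ) ∂μ := by
        rw [← lintegral_indicator hQ, lintegral_prod _ hhQ.aemeasurable]
    _ = ∫⁻ z, h z * μ (S z) ^ m ∂μ := lintegral_congr fun z => by
        change ∫⁻ w, (Prod.mk z ⁻¹' Q).indicator (fun _ => h z) w ∂_ = _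
        rw [lintegral_indicator_const (measurable_prodMk_left hQ), hslice, Measure.pi_pi]
        simp

lemma le_integral_iSup_pi {γ ι : Type*} [MeasurableSpace γ] [Fintype ι] [Nonempty ι]
    {μ : Measure γ} [IsProbabilityMeasure μ] {X : γ → ℝ} (hX : Measurable X)
    (hint : Integrable X μ) {l : ℝ} (hl : ∀ᵐ z ∂μ, l ≤ X z) (c : ℝ) :
    l + (c - l) * (1 - μ.real {z | X z < c} ^ Fintype.card ι) ≤
      ∫ v, ⨆ i, X (v i) ∂(Measure.pi fun _ : ι => μ) := by
  let P : Measure (ι → γ) := Measure.pi fun _ => μ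
  let E : Set (ι → γ) := Set.univ.pi fun _ => {z | X z < c}
  have hE : MeasurableSet E :=
    MeasurableSet.univ_pi fun _ => measurableSet_lt hX measurable_const
  have hPE : P.real E = μ.real {z | X z < c} ^ Fintype.card ι := by
    simp [P, E, measureReal_def, Measure.pi_pi]
  have hle (v : ι → γ) (i : ι) : X (v i) ≤ ⨆ i, X (v i) :=
    le_ciSup (Set.finite_range fun i => X (v i)).bddAbove i
  have hsup : Integrable (fun v => ⨆ i, X (v i)) P := by
    have hsum : Integrable (fun v : ι → γ => ∑ i, |X (v i)|) P :=
      integrable_finsetSum _ fun i _ => (integrable_comp_eval hint).abs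
    refine hsum.mono' (Measurable.iSup fun i => by fun_prop).aestronglyMeasurable
      (Filter.Eventually.of_forall fun v => ?_)
    obtain ⟨i, hi⟩ := exists_eq_ciSup_of_finite (f := fun i => X (v i))
    rw [← hi, Real.norm_eq_abs]
    exact Finset.single_le_sum (f := fun i => |X (v i)|) (fun _ _ => abs_nonneg _)
      (Finset.mem_univ i)
  have hind : Integrable (E.indicator fun _ => (1 : ℝ)) P := (integrable_const 1).indicator hE
  have hpointwise : ∀ᵐ v ∂P, c - (c - l) * E.indicator (fun _ => (1 : ℝ)) v ≤ ⨆ i, X (v i) := by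
    obtain ⟨i₀⟩ := ‹Nonempty ι›
    filter_upwards [(Measure.quasiMeasurePreserving_eval (fun _ => μ) i₀).ae hl] with v hv
    by_cases hvE : v ∈ E
    · rw [Set.indicator_of_mem hvE]
      linarith [hle v i₀]
    · obtain ⟨i, hi⟩ : ∃ i, c ≤ X (v i) := by simpa [E] using hvE
      rw [Set.indicator_of_notMem hvE]
      linarith [hle v i]
  calc l + (c - l) * (1 - μ.real {z | X z < c} ^ Fintype.card ι)
      = c - (c - l) * P.real E := by rw [hPE]; ring
    _ = ∫ v, (c - (c - l) * E.indicator (fun _ => (1 : ℝ)) v) ∂P := by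
        rw [integral_sub (integrable_const _) (hind.const_mul _), integral_const_mul,
          integral_indicator_const _ hE]
        simp
    _ ≤ ∫ v, ⨆ i, X (v i) ∂P :=
        integral_mono_ae ((integrable_const _).sub (hind.const_mul _)) hsup hpointwise

end ProductMeasure

section Delegation

variable {α : Type*}

/-- A choice rule of an agent facing the eligible set `A`: whatever it proposes is eligible and
maximizes the agent's utility among the eligible samples.  It may also propose nothing. -/
def IsFavoriteChoice {ι : Type*} (A : Set α) (sel : (ι → α × ℝ) → Option ι) : Prop :=
  ∀ v i, sel v = some i → (v i).1 ∈ A ∧ ∀ j, (v j).1 ∈ A → (v j).2 ≤ (v i).2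

/-- The principal's value `f x` of the proposed sample, or `0` without a proposal. -/
def proposalValue {ι M : Type*} [Zero M] (f : α → M) (sel : (ι → α × ℝ) → Option ι)
    (v : ι → α × ℝ) : M :=
  ((sel v).map fun i => f (v i).1).getD 0

/-- The samples which do not compete with an eligible sample of agent utility `y` when the eligible
`x`-values are `A`: they are not eligible or not better for the agent. -/
def nonRivals (A : Set α) (y : ℝ) : Set (α × ℝ) := (A ×ˢ Set.Ioi y)ᶜ

lemma mem_nonRivals {A : Set α} {y : ℝ} {w : α × ℝ} :
    w ∈ nonRivals A y ↔ (w.1 ∈ A → w.2 ≤ y) := by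
  simp [nonRivals]

variable [MeasurableSpace α]

/-- The law of a sample `(x, y)` with `x` distributed according to `F` and with an independent
uniform agent utility `y ∈ [0, 1]`. -/
noncomputable def sampleLaw (F : Measure α) : Measure (α × ℝ) :=
  F.prod ((volume : Measure ℝ).restrict (Set.Icc 0 1))

instance (F : Measure α) [IsProbabilityMeasure F] : IsProbabilityMeasure (sampleLaw F) := by
  have : IsProbabilityMeasure ((volume : Measure ℝ).restrict (Set.Icc 0 1)) := ⟨by simp⟩
  exact inferInstanceAs (IsProbabilityMeasure (F.prod _))

lemma ae_forall_fst_of_ae {ι : Type*} [Fintype ι] {F : Measure α} [IsProbabilityMeasure F]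
    {p : α → Prop} (hp : ∀ᵐ x ∂F, p x) :
    ∀ᵐ v ∂(Measure.pi fun _ : ι => sampleLaw F), ∀ i, p (v i).1 :=
  ae_all_iff.2 fun i => (Measure.quasiMeasurePreserving_eval (fun _ => sampleLaw F) i).ae
    (Measure.quasiMeasurePreserving_fst.ae hp)

lemma measurableSet_mem_nonRivals {A : Set α} (hA : MeasurableSet A) :
    MeasurableSet {p : (α × ℝ) × (α × ℝ) | p.2 ∈ nonRivals A p.1.2} := by
  simp only [mem_nonRivals, imp_iff_not_or]
  exact (measurableSet_preimage (f := fun p : (α × ℝ) × (α × ℝ) => p.2.1) (by fun_prop)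
    hA).compl.union (measurableSet_le (measurable_snd.comp measurable_snd)
      (measurable_snd.comp measurable_fst))

lemma sampleLaw_real_nonRivals (F : Measure α) [IsProbabilityMeasure F] {A : Set α}
    (hA : MeasurableSet A) {y : ℝ} (hy : y ∈ Set.Icc (0 : ℝ) 1) :
    (sampleLaw F).real (nonRivals A y) = 1 - F.real A * (1 - y) := by
  have hinter : Set.Ioi y ∩ Set.Icc 0 1 = Set.Ioc y 1 := by
    ext t
    exact ⟨fun ht => ⟨ht.1, ht.2.2⟩, fun ht => ⟨ht.1, hy.1.trans ht.1.le, ht.2⟩⟩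
  rw [nonRivals, probReal_compl_eq_one_sub (hA.prod measurableSet_Ioi), sampleLaw,
    measureReal_prod_prod, measureReal_restrict_apply measurableSet_Ioi, hinter,
    Real.volume_real_Ioc_of_le hy.2]

lemma sampleLaw_nonRivals_pow_le (F : Measure α) [IsProbabilityMeasure F] {A : Set α}
    (hA : MeasurableSet A) {y : ℝ} (hy : y ∈ Set.Icc (0 : ℝ) 1) (m : ℕ) :
    sampleLaw F (nonRivals A y) ^ m ≤
      ENNReal.ofReal (Real.exp (-(m * F.real A * (1 - y)))) := by
  have hreal : (sampleLaw F).real (nonRivals A y) ≤ Real.exp (-(F.real A * (1 - y))) := by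
    rw [sampleLaw_real_nonRivals F hA hy]
    exact Real.one_sub_le_exp_neg _
  rw [← ofReal_measureReal, ← ENNReal.ofReal_pow measureReal_nonneg, mul_assoc, ← mul_neg,
    Real.exp_nat_mul]
  exact ENNReal.ofReal_le_ofReal (pow_le_pow_left₀ measureReal_nonneg hreal m)

lemma setLIntegral_unbeaten_le (F : Measure α) [IsProbabilityMeasure F] {A : Set α}
    (hA : MeasurableSet A) {f : α → ENNReal} (hf : Measurable f) {m : ℕ} (i : Fin (m + 1)) :
    ∫⁻ v in {v | ∀ j, v (i.succAbove j) ∈ nonRivals A (v i).2}, A.indicator f (v i).1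
        ∂(Measure.pi fun _ => sampleLaw F) ≤
      (∫⁻ x in A, f x ∂F) * ENNReal.ofReal (unbeatenProb (m * F.real A)) := by
  have hind : Measurable (A.indicator f) := hf.indicator hA
  have hunif : ∀ᵐ z ∂(sampleLaw F), z.2 ∈ Set.Icc (0 : ℝ) 1 :=
    Measure.quasiMeasurePreserving_snd.ae (ae_restrict_mem measurableSet_Icc)
  calc ∫⁻ v in {v | ∀ j, v (i.succAbove j) ∈ nonRivals A (v i).2}, A.indicator f (v i).1
        ∂(Measure.pi fun _ => sampleLaw F)
      = ∫⁻ z, A.indicator f z.1 * sampleLaw F (nonRivals A z.2) ^ m ∂(sampleLaw F) :=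
        setLIntegral_pi_forall_succAbove (sampleLaw F) i (h := fun z => A.indicator f z.1)
          (S := fun z => nonRivals A z.2) (hind.comp measurable_fst)
          (measurableSet_mem_nonRivals hA)
    _ ≤ ∫⁻ z, A.indicator f z.1 *
          ENNReal.ofReal (Real.exp (-(m * F.real A * (1 - z.2)))) ∂(sampleLaw F) := by
        refine lintegral_mono_ae ?_
        filter_upwards [hunif] with z hz
        gcongr
        exact sampleLaw_nonRivals_pow_le F hA hz m
    _ = (∫⁻ x in A, f x ∂F) * ENNReal.ofReal (unbeatenProb (m * F.real A)) := by
        rw [sampleLaw, lintegral_prod_mul hind.aemeasurable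
          (g := fun y => ENNReal.ofReal (Real.exp (-(m * F.real A * (1 - y))))) (by fun_prop),
          lintegral_indicator hA, ofReal_unbeatenProb]

lemma lintegral_proposalValue_le (F : Measure α) [IsProbabilityMeasure F] {A : Set α}
    (hA : MeasurableSet A) {f : α → ENNReal} (hf : Measurable f) {m : ℕ}
    {sel : (Fin (m + 1) → α × ℝ) → Option (Fin (m + 1))} (hsel : IsFavoriteChoice A sel) :
    ∫⁻ v, proposalValue f sel v ∂(Measure.pi fun _ => sampleLaw F) ≤
      (m + 1) * ((∫⁻ x in A, f x ∂F) * ENNReal.ofReal (unbeatenProb (m * F.real A))) := by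
  let E (i : Fin (m + 1)) : Set (Fin (m + 1) → α × ℝ) :=
    {v | ∀ j, v (i.succAbove j) ∈ nonRivals A (v i).2}
  have hE (i) : MeasurableSet (E i) := by
    simp only [E, Set.ofPred_forall]
    exact MeasurableSet.iInter fun j => measurableSet_preimage
      (f := fun v : Fin (m + 1) → α × ℝ => (v i, v (i.succAbove j))) (by fun_prop)
      (measurableSet_mem_nonRivals hA)
  have hmeas (i) : Measurable ((E i).indicator fun v => A.indicator f (v i).1) :=
    ((hf.indicator hA).comp (by fun_prop)).indicator (hE i)
  have hpointwise (v) : proposalValue f sel v ≤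
      ∑ i, (E i).indicator (fun v => A.indicator f (v i).1) v := by
    cases hv : sel v with
    | none => simp [proposalValue, hv]
    | some i =>
      obtain ⟨hiA, hmax⟩ := hsel v i hv
      have hiE : v ∈ E i := fun j => mem_nonRivals.2 (hmax _)
      calc proposalValue f sel v = (E i).indicator (fun v => A.indicator f (v i).1) v := by
            simp [proposalValue, hv, hiE, hiA]
        _ ≤ _ := Finset.single_le_sum
            (f := fun i => (E i).indicator (fun v => A.indicator f (v i).1) v)
            (fun _ _ => zero_le) (Finset.mem_univ i)
  calc ∫⁻ v, proposalValue f sel v ∂(Measure.pi fun _ => sampleLaw F)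
      ≤ ∑ i, ∫⁻ v in E i, A.indicator f (v i).1 ∂(Measure.pi fun _ => sampleLaw F) := by
        simp only [← lintegral_indicator (hE _)]
        rw [← lintegral_finsetSum _ fun i _ => hmeas i]
        exact lintegral_mono hpointwise
    _ ≤ ∑ _ : Fin (m + 1), (∫⁻ x in A, f x ∂F) *
          ENNReal.ofReal (unbeatenProb (m * F.real A)) :=
        Finset.sum_le_sum fun i _ => setLIntegral_unbeaten_le F hA hf i
    _ = _ := by simp

lemma integral_proposalValue_le {F : Measure ℝ} [IsProbabilityMeasure F]
    (hF : ∀ᵐ x ∂F, 0 ≤ x) {A : Set ℝ} (hA : MeasurableSet A) {m : ℕ}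
    {sel : (Fin (m + 1) → ℝ × ℝ) → Option (Fin (m + 1))} (hsel : IsFavoriteChoice A sel)
    (hmeas : AEStronglyMeasurable (proposalValue id sel) (Measure.pi fun _ => sampleLaw F))
    {R : ℝ} (hR : 0 ≤ R) (hRA : ∫⁻ x in A, ENNReal.ofReal x ∂F ≤ ENNReal.ofReal R) :
    ∫ v, proposalValue id sel v ∂(Measure.pi fun _ => sampleLaw F) ≤
      (m + 1) * (R * unbeatenProb (m * F.real A)) := by
  have hnonneg : ∀ᵐ v ∂(Measure.pi fun _ => sampleLaw F), 0 ≤ proposalValue id sel v := by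
    filter_upwards [ae_forall_fst_of_ae hF] with v hv
    cases h : sel v with
    | none => simp [proposalValue, h]
    | some i => simpa [proposalValue, h] using hv i
  have hofReal (v) :
      ENNReal.ofReal (proposalValue id sel v) = proposalValue ENNReal.ofReal sel v := by
    cases h : sel v <;> simp [proposalValue, h]
  have hK := unbeatenProb_nonneg (m * F.real A)
  rw [integral_eq_lintegral_of_nonneg_ae hnonneg hmeas]
  refine ENNReal.toReal_le_of_le_ofReal (by positivity) ?_
  calc ∫⁻ v, ENNReal.ofReal (proposalValue id sel v) ∂(Measure.pi fun _ => sampleLaw F)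
      ≤ (m + 1) * ((∫⁻ x in A, ENNReal.ofReal x ∂F) *
          ENNReal.ofReal (unbeatenProb (m * F.real A))) := by
        simp only [hofReal]
        exact lintegral_proposalValue_le F hA ENNReal.measurable_ofReal hsel
    _ ≤ (m + 1) * (ENNReal.ofReal R * ENNReal.ofReal (unbeatenProb (m * F.real A))) := by gcongr
    _ = ENNReal.ofReal ((m + 1) * (R * unbeatenProb (m * F.real A))) := by
        rw [ENNReal.ofReal_mul (by positivity), ENNReal.ofReal_mul hR,
          ENNReal.ofReal_add (Nat.cast_nonneg m) zero_le_one, ENNReal.ofReal_natCast,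
          ENNReal.ofReal_one]

end Delegation

section ExtremalDistribution

/-- The uniform distribution on `[(1 - η) c, c]`, an atomless substitute for the point mass
at `c`. -/
noncomputable def nearDirac (η c : ℝ) : Measure ℝ := volume[|Set.Icc ((1 - η) * c) c]

lemma isProbabilityMeasure_nearDirac {η c : ℝ} (hη : 0 < η) (hc : 0 < c) :
    IsProbabilityMeasure (nearDirac η c) :=
  cond_isProbabilityMeasure_of_finite
    (by simpa using (by nlinarith : (1 - η) * c < c)) (by simp)

lemma nearDirac_singleton (η c x : ℝ) : nearDirac η c {x} = 0 :=
  cond_absolutelyContinuous Real.volume_singleton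

lemma ae_mem_Icc_nearDirac (η c : ℝ) :
    ∀ᵐ x ∂(nearDirac η c), x ∈ Set.Icc ((1 - η) * c) c :=
  ae_cond_mem measurableSet_Icc

lemma setLIntegral_ofReal_le_of_ae_le {μ : Measure ℝ} {c : ℝ} (h : ∀ᵐ x ∂μ, x ≤ c)
    (A : Set ℝ) : ∫⁻ x in A, ENNReal.ofReal x ∂μ ≤ ENNReal.ofReal c * μ A := by
  rw [← setLIntegral_const]
  exact lintegral_mono_ae (ae_restrict_of_ae (h.mono fun _ hx => ENNReal.ofReal_le_ofReal hx))

/-- The atomless substitute for the law giving mass `1 - δ` to `b` and mass `δ` to `H`. -/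
noncomputable def nearTwoPoint (η δ b H : ℝ) : Measure ℝ :=
  ENNReal.ofReal (1 - δ) • nearDirac η b + ENNReal.ofReal δ • nearDirac η H

variable {η δ b H : ℝ}

lemma isProbabilityMeasure_nearTwoPoint (hη : 0 < η) (hδ : δ ∈ Set.Icc (0 : ℝ) 1) (hb : 0 < b)
    (hH : 0 < H) : IsProbabilityMeasure (nearTwoPoint η δ b H) := by
  have := isProbabilityMeasure_nearDirac hη hb
  have := isProbabilityMeasure_nearDirac hη hH
  exact ⟨by simp [nearTwoPoint, ← ENNReal.ofReal_add (sub_nonneg.2 hδ.2) hδ.1]⟩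

lemma nearTwoPoint_singleton (η δ b H x : ℝ) : nearTwoPoint η δ b H {x} = 0 := by
  simp [nearTwoPoint, nearDirac_singleton]

lemma ae_mem_Icc_nearTwoPoint (δ : ℝ) (hη : η ≤ 1) (hbH : b ≤ H) :
    ∀ᵐ x ∂(nearTwoPoint η δ b H), x ∈ Set.Icc ((1 - η) * b) H := by
  have hle : (1 - η) * b ≤ (1 - η) * H := mul_le_mul_of_nonneg_left hbH (sub_nonneg.2 hη)
  refine ae_add_measure_iff.2 ⟨Measure.ae_smul_measure ?_ _, Measure.ae_smul_measure ?_ _⟩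
  · exact (ae_mem_Icc_nearDirac η b).mono fun x hx => ⟨hx.1, hx.2.trans hbH⟩
  · exact (ae_mem_Icc_nearDirac η H).mono fun x hx => ⟨hle.trans hx.1, hx.2⟩

lemma setLIntegral_ofReal_nearTwoPoint_le (hη : 0 < η) (hδ : δ ∈ Set.Icc (0 : ℝ) 1)
    (hb : 0 < b) (hH : 0 < H) (A : Set ℝ) :
    ∫⁻ x in A, ENNReal.ofReal x ∂(nearTwoPoint η δ b H) ≤
      ENNReal.ofReal (b * (nearTwoPoint η δ b H).real A + H * δ) := by
  have := isProbabilityMeasure_nearDirac hη hH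
  have := isProbabilityMeasure_nearTwoPoint hη hδ hb hH
  have hδ0 := hδ.1
  have hsupp (c : ℝ) : ∀ᵐ x ∂(nearDirac η c), x ≤ c :=
    (ae_mem_Icc_nearDirac η c).mono fun _ hx => hx.2
  have hbulk : ENNReal.ofReal (1 - δ) * ∫⁻ x in A, ENNReal.ofReal x ∂(nearDirac η b) ≤
      ENNReal.ofReal b * nearTwoPoint η δ b H A := by
    calc ENNReal.ofReal (1 - δ) * ∫⁻ x in A, ENNReal.ofReal x ∂(nearDirac η b)
        ≤ ENNReal.ofReal (1 - δ) * (ENNReal.ofReal b * nearDirac η b A) := by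
          gcongr; exact setLIntegral_ofReal_le_of_ae_le (hsupp b) A
      _ = ENNReal.ofReal b * (ENNReal.ofReal (1 - δ) * nearDirac η b A) := mul_left_comm _ _ _
      _ ≤ ENNReal.ofReal b * nearTwoPoint η δ b H A := by
          gcongr; exact le_self_add
  have htail : ENNReal.ofReal δ * ∫⁻ x in A, ENNReal.ofReal x ∂(nearDirac η H) ≤
      ENNReal.ofReal (H * δ) := by
    calc ENNReal.ofReal δ * ∫⁻ x in A, ENNReal.ofReal x ∂(nearDirac η H)
        ≤ ENNReal.ofReal δ * (ENNReal.ofReal H * 1) := by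
          gcongr
          exact (setLIntegral_ofReal_le_of_ae_le (hsupp H) A).trans (by gcongr; exact prob_le_one)
      _ = ENNReal.ofReal (H * δ) := by rw [mul_one, mul_comm, ENNReal.ofReal_mul hH.le]
  calc ∫⁻ x in A, ENNReal.ofReal x ∂(nearTwoPoint η δ b H)
      = ENNReal.ofReal (1 - δ) * ∫⁻ x in A, ENNReal.ofReal x ∂(nearDirac η b) +
          ENNReal.ofReal δ * ∫⁻ x in A, ENNReal.ofReal x ∂(nearDirac η H) := by
        simp only [nearTwoPoint, Measure.restrict_add, Measure.restrict_smul,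
          lintegral_add_measure, lintegral_smul_measure, smul_eq_mul]
    _ ≤ ENNReal.ofReal b * nearTwoPoint η δ b H A + ENNReal.ofReal (H * δ) :=
        add_le_add hbulk htail
    _ = ENNReal.ofReal (b * (nearTwoPoint η δ b H).real A + H * δ) := by
        rw [ENNReal.ofReal_add (by positivity) (by positivity), ENNReal.ofReal_mul hb.le,
          ofReal_measureReal]

lemma nearTwoPoint_real_Iio_le (hη : 0 < η) (hδ : δ ≤ 1) (hb : 0 < b) (H : ℝ) :
    (nearTwoPoint η δ b H).real (Set.Iio ((1 - η) * H)) ≤ 1 - δ := by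
  have := isProbabilityMeasure_nearDirac hη hb
  have htail : nearDirac η H (Set.Iio ((1 - η) * H)) = 0 :=
    measure_eq_zero_iff_ae_notMem.2 <|
      (ae_mem_Icc_nearDirac η H).mono fun _ hx => not_lt_of_ge hx.1
  refine ENNReal.toReal_le_of_le_ofReal (sub_nonneg.2 hδ) ?_
  calc nearTwoPoint η δ b H (Set.Iio ((1 - η) * H))
      = ENNReal.ofReal (1 - δ) * nearDirac η b (Set.Iio ((1 - η) * H)) := by
        simp [nearTwoPoint, htail]
    _ ≤ ENNReal.ofReal (1 - δ) := mul_le_of_le_one_right' prob_le_one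

/-- The distribution used for `m + 1` samples: a sample is of size about `tailMean * (m + 1)` with
probability `1 / (m * (m + 1))` and of size about `bulkValue` otherwise. -/
noncomputable def extremalLaw (m : ℕ) : Measure ℝ :=
  nearTwoPoint (1 / m) (1 / (m * (m + 1))) bulkValue (tailMean * (m + 1))

variable {m : ℕ}

lemma one_div_mul_add_one_mem_Icc (hm : 0 < m) : (1 / (m * (m + 1)) : ℝ) ∈ Set.Icc (0 : ℝ) 1 := by
  have hm1 : (1 : ℝ) ≤ m := by exact_mod_cast hm
  exact ⟨by positivity, div_le_one_of_le₀ (by nlinarith) (by positivity)⟩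

lemma one_div_natCast_le_one (m : ℕ) : (1 / m : ℝ) ≤ 1 := by
  simpa using Nat.cast_inv_le_one m

lemma bulkValue_le_tailMean_mul (m : ℕ) : bulkValue ≤ tailMean * (m + 1) :=
  bulkValue_le_tailMean.trans (le_mul_of_one_le_right tailMean_pos.le (by simp))

lemma isProbabilityMeasure_extremalLaw (hm : 0 < m) : IsProbabilityMeasure (extremalLaw m) :=
  isProbabilityMeasure_nearTwoPoint (by positivity) (one_div_mul_add_one_mem_Icc hm) bulkValue_pos
    (mul_pos tailMean_pos (by positivity))

lemma ae_mem_Icc_extremalLaw (m : ℕ) :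
    ∀ᵐ x ∂(extremalLaw m), x ∈ Set.Icc ((1 - 1 / m) * bulkValue) (tailMean * (m + 1)) :=
  ae_mem_Icc_nearTwoPoint _ (one_div_natCast_le_one m) (bulkValue_le_tailMean_mul m)

lemma ae_nonneg_extremalLaw (m : ℕ) : ∀ᵐ x ∂(extremalLaw m), 0 ≤ x :=
  (ae_mem_Icc_extremalLaw m).mono fun _ hx =>
    (mul_nonneg (sub_nonneg.2 (one_div_natCast_le_one m)) bulkValue_pos.le).trans hx.1

lemma integral_proposalValue_extremalLaw_le (hm : 0 < m) {A : Set ℝ} (hA : MeasurableSet A)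
    {sel : (Fin (m + 1) → ℝ × ℝ) → Option (Fin (m + 1))} (hsel : IsFavoriteChoice A sel)
    (hmeas : AEStronglyMeasurable (proposalValue id sel)
      (Measure.pi fun _ => sampleLaw (extremalLaw m))) :
    ∫ v, proposalValue id sel v ∂(Measure.pi fun _ => sampleLaw (extremalLaw m)) ≤
      (1 + 1 / m) * (1 - 1 / Real.exp 1) := by
  have := isProbabilityMeasure_extremalLaw hm
  have hbulk := bulkValue_pos
  have htail := tailMean_pos
  let p : ℝ := (extremalLaw m).real A
  let R : ℝ := bulkValue * p + tailMean * (m + 1) * (1 / (m * (m + 1)))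
  have hRA : ∫⁻ x in A, ENNReal.ofReal x ∂(extremalLaw m) ≤ ENNReal.ofReal R :=
    setLIntegral_ofReal_nearTwoPoint_le (by positivity) (one_div_mul_add_one_mem_Icc hm) hbulk
      (by positivity) A
  calc ∫ v, proposalValue id sel v ∂(Measure.pi fun _ => sampleLaw (extremalLaw m))
      ≤ (m + 1) * (R * unbeatenProb (m * p)) :=
        integral_proposalValue_le (ae_nonneg_extremalLaw m) hA hsel hmeas (by positivity) hRA
    _ = (1 + 1 / m) * ((tailMean + bulkValue * (m * p)) * unbeatenProb (m * p)) := by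
        simp only [R]
        field_simp
        ring
    _ ≤ (1 + 1 / m) * (1 - 1 / Real.exp 1) := by
        gcongr
        exact tailMean_add_bulkValue_mul_unbeatenProb_le
          (mul_nonneg m.cast_nonneg measureReal_nonneg)

lemma one_div_one_add_le_bulkValue_add (hm : 0 < m) :
    1 / (1 + 1 / (m : ℝ)) ≤ bulkValue +
      (tailMean * (m + 1) - bulkValue) * (1 - (1 - 1 / (m * (m + 1) : ℝ)) ^ (m + 1)) := by
  have hm0 : (0 : ℝ) < m := by exact_mod_cast hm
  have hpow : (1 - 1 / (m * (m + 1) : ℝ)) ^ (m + 1) ≤ 1 / (1 + 1 / m) := by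
    obtain ⟨h0, h1⟩ := one_div_mul_add_one_mem_Icc hm
    convert one_sub_pow_le_one_div_one_add_mul h0 h1 (m + 1) using 3
    push_cast
    field_simp
  calc 1 / (1 + 1 / (m : ℝ)) ≤ (bulkValue + tailMean * (m + 1) * (1 / m)) / (1 + 1 / m) := by
        have htail : tailMean * (m + 1) * (1 / m) = tailMean + tailMean / m := by field_simp
        have hpos : 0 < tailMean / m := div_pos tailMean_pos hm0
        gcongr
        linarith [tailMean_add_bulkValue]
    _ = bulkValue + (tailMean * (m + 1) - bulkValue) * (1 - 1 / (1 + 1 / m)) := by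
        field_simp
        ring
    _ ≤ _ := by
        have hle : 0 ≤ tailMean * (m + 1) - bulkValue :=
          sub_nonneg.2 (bulkValue_le_tailMean_mul m)
        gcongr

lemma le_integral_iSup_extremalLaw (hm : 0 < m) :
    (1 - 1 / m) / (1 + 1 / m) ≤
      ∫ v, (⨆ i, (v i).1) ∂(Measure.pi fun _ : Fin (m + 1) => sampleLaw (extremalLaw m)) := by
  have := isProbabilityMeasure_extremalLaw hm
  have hη : (0 : ℝ) ≤ 1 - 1 / m := sub_nonneg.2 (one_div_natCast_le_one m)
  have hbH := bulkValue_le_tailMean_mul m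
  let l : ℝ := (1 - 1 / m) * bulkValue
  let c : ℝ := (1 - 1 / m) * (tailMean * (m + 1))
  let q : ℝ := (sampleLaw (extremalLaw m)).real {z | z.1 < c}
  have hq : q ≤ 1 - 1 / (m * (m + 1)) := by
    have hprod : {z : ℝ × ℝ | z.1 < c} = Set.Iio c ×ˢ Set.univ := by ext; simp
    calc q = (extremalLaw m).real (Set.Iio c) := by
          simp [q, hprod, sampleLaw, measureReal_prod_prod]
      _ ≤ 1 - 1 / (m * (m + 1)) :=
          nearTwoPoint_real_Iio_le (by positivity) (one_div_mul_add_one_mem_Icc hm).2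
            bulkValue_pos _
  have hint : Integrable (fun z => z.1) (sampleLaw (extremalLaw m)) :=
    (Integrable.of_mem_Icc _ _ aemeasurable_id (ae_mem_Icc_extremalLaw m)).comp_fst _
  have hl : ∀ᵐ z ∂(sampleLaw (extremalLaw m)), l ≤ z.1 :=
    Measure.quasiMeasurePreserving_fst.ae ((ae_mem_Icc_extremalLaw m).mono fun _ hx => hx.1)
  calc (1 - 1 / m) / (1 + 1 / m)
      ≤ (1 - 1 / m) * (bulkValue + (tailMean * (m + 1) - bulkValue) *
          (1 - (1 - 1 / (m * (m + 1) : ℝ)) ^ (m + 1))) := by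
        rw [div_eq_mul_one_div]
        exact mul_le_mul_of_nonneg_left (one_div_one_add_le_bulkValue_add hm) hη
    _ = l + (c - l) * (1 - (1 - 1 / (m * (m + 1) : ℝ)) ^ (m + 1)) := by ring
    _ ≤ l + (c - l) * (1 - q ^ (m + 1)) := by
        have hlc : 0 ≤ c - l := by rw [← mul_sub]; exact mul_nonneg hη (sub_nonneg.2 hbH)
        gcongr
    _ ≤ _ := by simpa using le_integral_iSup_pi (ι := Fin (m + 1)) measurable_fst hint hl c

end ExtremalDistribution

theorem delegation_one_minus_inv_e_tight_general {ε : ℝ} (hε : 0 < ε) :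
    ∃ (n : ℕ) (F : Measure ℝ), 0 < n ∧ IsProbabilityMeasure F ∧
      F {v | v < 0} = 0 ∧ (∀ c : ℝ, F {c} = 0) ∧
      ∀ A : Set ℝ, MeasurableSet A →
      ∀ sel : (Fin n → ℝ × ℝ) → Option (Fin n), IsFavoriteChoice A sel →
        AEStronglyMeasurable (proposalValue id sel) (Measure.pi fun _ : Fin n => sampleLaw F) →
        ∫ v, proposalValue id sel v ∂(Measure.pi fun _ : Fin n => sampleLaw F) <
          (1 - 1 / Real.exp 1 + ε) *
            ∫ v, (⨆ i, (v i).1) ∂(Measure.pi fun _ : Fin n => sampleLaw F) := by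
  obtain ⟨m, hm, hlt⟩ := exists_pos_one_add_inv_mul_lt (1 - 1 / Real.exp 1) hε
  have hfactor : 0 ≤ 1 - 1 / Real.exp 1 + ε :=
    add_nonneg (sub_nonneg.2 (div_le_one_of_le₀ (by simp) (Real.exp_pos 1).le)) hε.le
  refine ⟨m + 1, extremalLaw m, m.succ_pos, isProbabilityMeasure_extremalLaw hm,
    by simpa [ae_iff] using ae_nonneg_extremalLaw m, nearTwoPoint_singleton _ _ _ _,
    fun A hA sel hsel hmeas => ?_⟩
  calc ∫ v, proposalValue id sel v ∂(Measure.pi fun _ => sampleLaw (extremalLaw m))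
      ≤ (1 + 1 / m) * (1 - 1 / Real.exp 1) :=
        integral_proposalValue_extremalLaw_le hm hA hsel hmeas
    _ < (1 - 1 / Real.exp 1 + ε) * ((1 - 1 / m) / (1 + 1 / m)) := hlt
    _ ≤ _ := mul_le_mul_of_nonneg_left (le_integral_iSup_extremalLaw hm) hfactor

/-- tightness of the factor `1 − 1/e` when the principal cannot
observe the agent's utility.  For every `ε > 0` there exist an integer `n` and an
atomless distribution `F` on `[0,∞)` such that for every measurable set
`A ⊆ [0,∞)` of eligible `x`-values: when the agent draws `n` i.i.d. pairs
`(x_i,y_i)` with `x_i ∼ F` and `y_i` uniform on `[0,1]` independent of everything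
else, and proposes the sample of maximum `y_i` among those with `x_i ∈ A`
(proposing nothing if no sample qualifies), the principal's expected utility — the
`x`-value of the accepted proposal, or `0` if none — is less than
`(1 − 1/e + ε)·E[max_i x_i]`. -/
theorem delegation_one_minus_inv_e_tight :
    ∀ ε : ℝ, 0 < ε →
    ∃ (n : ℕ) (F : Measure ℝ), 0 < n ∧ IsProbabilityMeasure F ∧
      F {v | v < 0} = 0 ∧ (∀ c : ℝ, F {c} = 0) ∧
      ∀ A : Set ℝ, MeasurableSet A → A ⊆ {v | 0 ≤ v} →
      ∀ sel : (Fin n → ℝ × ℝ) → Option (Fin n),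
        (∀ v i, sel v = some i → (v i).1 ∈ A ∧ ∀ j, (v j).1 ∈ A → (v j).2 ≤ (v i).2) →
        (∀ v, (∃ i, (v i).1 ∈ A) → (sel v).isSome) →
        AEStronglyMeasurable (fun v => ((sel v).map fun i => (v i).1).getD 0)
          (Measure.pi fun _ : Fin n =>
            F.prod ((volume : Measure ℝ).restrict (Set.Icc (0:ℝ) 1))) →
        ∫ v, ((sel v).map fun i => (v i).1).getD 0
            ∂(Measure.pi fun _ : Fin n =>
                F.prod ((volume : Measure ℝ).restrict (Set.Icc (0:ℝ) 1)))
          < (1 - 1 / Real.exp 1 + ε) *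
              ∫ v, (⨆ i, (v i).1)
                ∂(Measure.pi fun _ : Fin n =>
                    F.prod ((volume : Measure ℝ).restrict (Set.Icc (0:ℝ) 1))) := by
  intro ε hε
  obtain ⟨n, F, hn, hF, hnonneg, hatom, hlt⟩ := delegation_one_minus_inv_e_tight_general hε
  exact ⟨n, F, hn, hF, hnonneg, hatom, fun A hA _ sel hsel _ hmeas => hlt A hA sel hsel hmeas⟩
end

section
/- Let v be a nonnegative integrable random variable, let z be a real number, and set c = E[(v − z)^+]. Let A and B be {0,1}-valued random variables on the same probability space with A ≤ B pointwise and with B independent of v. Then E[A·v − B·c] ≤ E[A·min(v, z)]. -/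
open MeasureTheory ProbabilityTheory

/-!
Since `v = min (v, z) + (v - z)⁺`, claiming the prize is worth the covered call value plus a
surplus `(v - z)⁺`. The surplus is nonnegative, so `A ≤ B` gives `A (v - z)⁺ ≤ B (v - z)⁺`, and by
independence the latter has mean `E[B] c`, which is exactly the expected cost of opening.
-/

lemma mul_le_mul_min_add_mul_max_sub {R : Type*} [Ring R] [LinearOrder R] [IsOrderedRing R]
    {a b : R} (hab : a ≤ b) (x z : R) :
    a * x ≤ a * min x z + b * max (x - z) 0 := by
  have hmin : min x z = x - max (x - z) 0 := inf_eq_sub_posPart_sub x z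
  calc a * x = a * min x z + a * max (x - z) 0 := by rw [hmin, mul_sub, sub_add_cancel]
    _ ≤ a * min x z + b * max (x - z) 0 := by gcongr

lemma norm_le_one_of_eq_zero_or_one {R : Type*} [SeminormedRing R] [NormOneClass R] {x : R}
    (hx : x = 0 ∨ x = 1) : ‖x‖ ≤ 1 := by
  rcases hx with rfl | rfl <;> simp

lemma integrable_mul_min {Ω : Type*} [MeasurableSpace Ω] {μ : Measure Ω} {A v w : Ω → ℝ}
    (hA : AEStronglyMeasurable A μ) (hv : AEStronglyMeasurable v μ)
    (hw : AEStronglyMeasurable w μ)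
    (hAv : Integrable (fun ω => A ω * v ω) μ) (hAw : Integrable (fun ω => A ω * w ω) μ) :
    Integrable (fun ω => A ω * min (v ω) (w ω)) μ := by
  refine (hAv.norm.add hAw.norm).mono' (hA.mul (hv.inf hw)) (.of_forall fun ω => ?_)
  rcases min_choice (v ω) (w ω) with h | h <;> simp [h, mul_nonneg]

theorem covered_call_bound_general {Ω : Type*} [MeasurableSpace Ω]
    (μ : Measure Ω) [IsFiniteMeasure μ]
    (v : Ω → ℝ) (hv : Integrable v μ)
    (z c : ℝ) (hc : c = ∫ ω, max (v ω - z) 0 ∂μ)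
    (A B : Ω → ℝ) (hA : Integrable A μ) (hB : Integrable B μ)
    (hAv : Integrable (fun ω => A ω * v ω) μ)
    (hAB : A ≤ᵐ[μ] B) (hindep : IndepFun B v μ) :
    ∫ ω, (A ω * v ω - B ω * c) ∂μ ≤ ∫ ω, A ω * min (v ω) z ∂μ := by
  have hmin : Integrable (fun ω => A ω * min (v ω) z) μ :=
    integrable_mul_min hA.1 hv.1 aestronglyMeasurable_const hAv (hA.mul_const z)
  have hsurplus : Integrable (fun ω => max (v ω - z) 0) μ :=
    (hv.sub (integrable_const z)).pos_part
  have hindep_surplus : IndepFun B (fun ω => max (v ω - z) 0) μ :=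
    hindep.comp (φ := id) (ψ := fun x => max (x - z) 0) measurable_id (by fun_prop)
  have hprod : Integrable (fun ω => B ω * max (v ω - z) 0) μ :=
    hindep_surplus.integrable_mul hB hsurplus
  have hcost : ∫ ω, B ω * max (v ω - z) 0 ∂μ = (∫ ω, B ω ∂μ) * c :=
    hc ▸ hindep_surplus.integral_fun_mul_eq_mul_integral hB.1 hsurplus.1
  rw [integral_sub hAv (hB.mul_const c), integral_mul_const, sub_le_iff_le_add]
  calc ∫ ω, A ω * v ω ∂μ
      ≤ ∫ ω, (A ω * min (v ω) z + B ω * max (v ω - z) 0) ∂μ :=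
        integral_mono_ae hAv (hmin.add hprod) <|
          hAB.mono fun ω h => mul_le_mul_min_add_mul_max_sub h (v ω) z
    _ = ∫ ω, A ω * min (v ω) z ∂μ + (∫ ω, B ω ∂μ) * c := by
        rw [integral_add hmin hprod, hcost]

/-- Let `v` be a nonnegative integrable random variable, let `z` be a
real number, and set `c = E[(v − z)^+]`.  Let `A` and `B` be `{0,1}`-valued random
variables on the same probability space with `A ≤ B` pointwise and with `B` independent
of `v`.  Then `E[A·v − B·c] ≤ E[A·min(v, z)]`.
Here `(v − z)^+ = max(v − z, 0)`; `z` is the strike price of a box with prize `v` and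
opening cost `c`, `min(v,z)` is its covered call value, `A` indicates that the box's
prize is claimed and `B` that the box is opened, the opening decision being made
without knowledge of `v`. -/
theorem covered_call_bound {Ω : Type*} [MeasurableSpace Ω]
    (μ : Measure Ω) [IsProbabilityMeasure μ]
    (v : Ω → ℝ) (hv_meas : Measurable v) (hv_nonneg : ∀ ω, 0 ≤ v ω)
    (hv_int : Integrable v μ)
    (z c : ℝ) (hc : c = ∫ ω, max (v ω - z) 0 ∂μ)
    (A B : Ω → ℝ) (hA_meas : Measurable A) (hB_meas : Measurable B)
    (hA01 : ∀ ω, A ω = 0 ∨ A ω = 1) (hB01 : ∀ ω, B ω = 0 ∨ B ω = 1)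
    (hAB : ∀ ω, A ω ≤ B ω)
    (hindep : IndepFun B v μ) :
    ∫ ω, (A ω * v ω - B ω * c) ∂μ ≤ ∫ ω, A ω * min (v ω) z ∂μ := by
  have hA : ∀ᵐ ω ∂μ, ‖A ω‖ ≤ 1 := .of_forall fun ω => norm_le_one_of_eq_zero_or_one (hA01 ω)
  have hB : ∀ᵐ ω ∂μ, ‖B ω‖ ≤ 1 := .of_forall fun ω => norm_le_one_of_eq_zero_or_one (hB01 ω)
  exact covered_call_bound_general μ v hv_int z c hc A B
    (.of_bound hA_meas.aestronglyMeasurable 1 hA) (.of_bound hB_meas.aestronglyMeasurable 1 hB)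
    (hv_int.bdd_mul hA_meas.aestronglyMeasurable hA) (.of_forall hAB) hindep
end

section
/- In the box problem with boxes considered in the fixed exogenous order 1, 2, …, m, there exists a half-infinite interval X of the form (θ,∞) or [θ,∞) such that the κ-thresholding policy with target interval X has expected net value at least (1/2)·E[max_{1≤i≤m} κ_i]; since E[max_i κ_i] is an upper bound on the expected net value of any sequential search procedure (even one free to choose the order of the boxes), this policy attains at least half the expected net value of the optimal search procedure. -/
/-
Write `κ i = min (v i) (z i)`. The surplus `v i - κ i = (v i - z i)⁺` of a box has mean `c i`. If
`X` is an upper set, an opened box with a positive surplus has `κ i = z i ∈ X`, so its prize is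
claimed. Hence surpluses and costs cancel in expectation, and the expected net value of the policy
is the expected value of the first `κ i` in `X`.

It remains to bound the latter for `X = (θ, ∞)`, which is the prophet inequality. Let `p` be the
probability that no `κ i` exceeds `θ`. The first value above `θ` is worth `θ` with probability
`1 - p`, plus the excess `(κ i - θ)⁺` collected at the first crossing. Since `κ i` is independent of
the earlier values, and box `i` is reached with probability at least `p`, the expected excess
is at least `p * ∑ i, 𝔼 (κ i - θ)⁺ ≥ p * (𝔼 (⨆ i, κ i) - θ)`. The choice
`θ = 𝔼 (⨆ i, κ i) / 2` makes the two contributions add up to `θ`.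
-/

open MeasureTheory ProbabilityTheory

open Classical in
/-- The (realized) net value of the `κ`-thresholding policy with target interval `X` in
the box problem with exogenous order `1,…,m`: going through boxes in order it skips
every box with `z i ∉ X`, opens every box with `z i ∈ X` (paying `c i`), and stops and
claims the prize of the first opened box whose prize `v i` lies in `X`.  Since `X` is
a half-infinite interval, the policy stops exactly at the first `i` with
`κ i = min (v i) (z i) ∈ X`, having opened all boxes `j ≤ i` with `z j ∈ X`. -/
noncomputable def kappaThreshNet {m : ℕ} (v z c : Fin m → ℝ) (X : Set ℝ) : ℝ :=
  match Fin.find? (fun i => decide (min (v i) (z i) ∈ X)) with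
  | some i => v i - ∑ j ∈ Finset.univ.filter (fun j : Fin m => z j ∈ X ∧ j ≤ i), c j
  | none => - ∑ j ∈ Finset.univ.filter (fun j : Fin m => z j ∈ X), c j

section Integrals

variable {Ω ι : Type*} [MeasurableSpace Ω] {μ : Measure Ω}

theorem setIntegral_preimage_comp_eq_mul {β γ : Type*} [MeasurableSpace β]
    [MeasurableSpace γ] {Y : Ω → β} {Z : Ω → γ} (hindep : IndepFun Y Z μ)
    (hY : AEMeasurable Y μ) (hZ : AEMeasurable Z μ) {A : Set β} (hA : MeasurableSet A)
    {g : γ → ℝ} (hg : Measurable g) :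
    ∫ ω in Y ⁻¹' A, g (Z ω) ∂μ = μ.real (Y ⁻¹' A) * ∫ ω, g (Z ω) ∂μ := by
  have hYA : NullMeasurableSet (Y ⁻¹' A) μ := hY.nullMeasurableSet_preimage hA
  calc ∫ ω in Y ⁻¹' A, g (Z ω) ∂μ = ∫ ω, A.indicator (1 : β → ℝ) (Y ω) * g (Z ω) ∂μ := by
        rw [← integral_indicator₀ hYA]
        congr with ω
        by_cases hω : Y ω ∈ A <;> simp [hω]
    _ = (∫ ω, A.indicator (1 : β → ℝ) (Y ω) ∂μ) * ∫ ω, g (Z ω) ∂μ :=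
        hindep.integral_fun_comp_mul_comp hY hZ
          (measurable_one.indicator hA).aestronglyMeasurable hg.aestronglyMeasurable
    _ = μ.real (Y ⁻¹' A) * ∫ ω, g (Z ω) ∂μ := by
        rw [show (fun ω ↦ A.indicator (1 : β → ℝ) (Y ω)) = (Y ⁻¹' A).indicator 1 from rfl,
          integral_indicator₀ hYA]
        simp only [Pi.one_apply, integral_const, measureReal_restrict_apply_univ, smul_eq_mul,
          mul_one]

theorem integrable_ciSup [Finite ι] [Nonempty ι] {x : ι → Ω → ℝ}
    (hx : ∀ i, Integrable (x i) μ) : Integrable (fun ω ↦ ⨆ i, x i ω) μ := by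
  cases nonempty_fintype ι
  simp_rw [← Finset.sup'_univ_eq_ciSup, ← Finset.sup'_apply]
  exact Finset.sup'_induction (p := (Integrable · μ)) _ _ (fun _ hf _ hg ↦ hf.sup hg)
    fun i _ ↦ hx i

theorem integral_ciSup_sub_le_sum_integral_max [IsProbabilityMeasure μ] [Fintype ι] [Nonempty ι]
    {x : ι → Ω → ℝ} (hx : ∀ i, Integrable (x i) μ) (θ : ℝ) :
    ∫ ω, ⨆ i, x i ω ∂μ - θ ≤ ∑ i, ∫ ω, max (x i ω - θ) 0 ∂μ := by
  have excess_integrable : ∀ i, Integrable (fun ω ↦ max (x i ω - θ) 0) μ := fun i ↦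
    ((hx i).sub (integrable_const θ)).pos_part
  have pointwise : ∀ ω, ⨆ i, x i ω ≤ θ + ∑ i, max (x i ω - θ) 0 := fun ω ↦ ciSup_le fun i ↦
    calc x i ω = θ + (x i ω - θ) := by ring
      _ ≤ θ + max (x i ω - θ) 0 := by gcongr; exact le_max_left _ _
      _ ≤ θ + ∑ i, max (x i ω - θ) 0 := by
        gcongr
        exact Finset.single_le_sum (f := fun i ↦ max (x i ω - θ) 0)
          (fun _ _ ↦ le_max_right _ _) (Finset.mem_univ i)
  have sum_integrable := integrable_finsetSum Finset.univ fun i _ ↦ excess_integrable i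
  have := integral_mono (integrable_ciSup hx) ((integrable_const θ).add sum_integrable) pointwise
  simp only [Pi.add_apply] at this
  rw [integral_add (integrable_const θ) sum_integrable,
    integral_finsetSum _ fun i _ ↦ excess_integrable i, integral_const, probReal_univ, one_smul]
    at this
  linarith

end Integrals

section FirstHit

variable {Ω ι α : Type*}

/-- The covered call values `κ i` of prizes `v` and strike prices `z`. -/
def coveredCall (v : ι → Ω → ℝ) (z : ι → ℝ) (i : ι) (ω : Ω) : ℝ :=
  min (v i ω) (z i)

theorem integrable_coveredCall [MeasurableSpace Ω] {μ : Measure Ω} [IsFiniteMeasure μ]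
    {v : ι → Ω → ℝ} {i : ι} (hv : Integrable (v i) μ) (z : ι → ℝ) :
    Integrable (coveredCall v z i) μ :=
  hv.inf (integrable_const (z i))

variable [LinearOrder ι]

/-- The event that the sequence `x` has not visited `X` before the index `i`. -/
def notHitBefore (x : ι → Ω → α) (X : Set α) (i : ι) : Set Ω :=
  {ω | ∀ j < i, x j ω ∉ X}

/-- The value of `x` at its first visit to `X`, and `0` if there is none: the reward of a gambler
who is offered the values `x i` in order and accepts the first one in `X`. It is written as a sum
with at most one nonzero term. -/
noncomputable def firstHitValue [Fintype ι] (x : ι → Ω → ℝ) (X : Set ℝ) (ω : Ω) : ℝ :=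
  ∑ i, (notHitBefore x X i).indicator (fun ω ↦ X.indicator id (x i ω)) ω

section Pointwise

variable {x : ι → Ω → α} {X : Set α} {i : ι} {ω : Ω}

theorem mem_notHitBefore_iff_le (hi : x i ω ∈ X) (hω : ω ∈ notHitBefore x X i) {j : ι} :
    ω ∈ notHitBefore x X j ↔ j ≤ i :=
  ⟨fun hj ↦ le_of_not_gt fun hij ↦ hj i hij hi, fun hji k hk ↦ hω k (hk.trans_le hji)⟩

theorem sum_indicator_notHitBefore [Fintype ι] (hi : x i ω ∈ X) (hω : ω ∈ notHitBefore x X i)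
    {g : ι → Ω → ℝ} (hg : ∀ j, x j ω ∉ X → g j ω = 0) :
    ∑ j, (notHitBefore x X j).indicator (g j) ω = g i ω := by
  rw [Fintype.sum_eq_single i, Set.indicator_of_mem hω]
  intro j hji
  rw [Set.indicator_apply_eq_zero, mem_notHitBefore_iff_le hi hω]
  exact fun hle ↦ hg j (hω j (hle.lt_of_ne hji))

theorem exists_mem_notHitBefore [WellFoundedLT ι] (h : ∃ i, x i ω ∈ X) :
    ∃ i, x i ω ∈ X ∧ ω ∈ notHitBefore x X i := by
  obtain ⟨i, hi, hmin⟩ := wellFounded_lt.has_min {i | x i ω ∈ X} h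
  exact ⟨i, hi, fun j hj hmem ↦ hmin j hmem hj⟩

end Pointwise

section FirstHitValue

variable [Fintype ι] {x : ι → Ω → ℝ} {X : Set ℝ} {i : ι} {ω : Ω}

theorem firstHitValue_of_mem (hi : x i ω ∈ X) (hω : ω ∈ notHitBefore x X i) :
    firstHitValue x X ω = x i ω := by
  rw [firstHitValue, sum_indicator_notHitBefore hi hω fun j hj ↦ Set.indicator_of_notMem hj _,
    Set.indicator_of_mem hi, id]

theorem firstHitValue_of_forall_notMem (h : ∀ i, x i ω ∉ X) : firstHitValue x X ω = 0 :=
  Finset.sum_eq_zero fun i _ ↦ by simp [h i]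

theorem firstHitValue_Ioi (x : ι → Ω → ℝ) (θ : ℝ) (ω : Ω) :
    firstHitValue x (Set.Ioi θ) ω =
      {ω | ∀ i, x i ω ≤ θ}ᶜ.indicator (fun _ ↦ θ) ω +
        ∑ i, (notHitBefore x (Set.Ioi θ) i).indicator (fun ω ↦ max (x i ω - θ) 0) ω := by
  have excess_eq_zero : ∀ i, x i ω ∉ Set.Ioi θ → max (x i ω - θ) 0 = 0 := fun i hi ↦
    max_eq_right (sub_nonpos.2 (not_lt.1 hi))
  by_cases h : ∀ i, x i ω ≤ θ
  · have miss : ∀ i, x i ω ∉ Set.Ioi θ := fun i ↦ not_lt.2 (h i)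
    rw [firstHitValue_of_forall_notMem miss, Set.indicator_of_notMem (by simpa using h),
      Finset.sum_eq_zero, add_zero]
    exact fun i _ ↦ Set.indicator_apply_eq_zero.2 fun _ ↦ excess_eq_zero i (miss i)
  · obtain ⟨i, hi, hω⟩ := exists_mem_notHitBefore (X := Set.Ioi θ) (by simpa using h)
    rw [firstHitValue_of_mem hi hω, sum_indicator_notHitBefore hi hω excess_eq_zero,
      Set.indicator_of_mem (by simpa using h), max_eq_left (sub_nonneg.2 (le_of_lt hi))]
    ring

end FirstHitValue

open Classical in
theorem kappaThreshNet_eq_firstHitValue_add {m : ℕ} (v : Fin m → Ω → ℝ) (z c : Fin m → ℝ)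
    {X : Set ℝ} (hX : IsUpperSet X) (ω : Ω) :
    kappaThreshNet (v · ω) z c X =
      firstHitValue (coveredCall v z) X ω +
        ∑ i with z i ∈ X, (notHitBefore (coveredCall v z) X i).indicator
          (fun ω ↦ max (v i ω - z i) 0 - c i) ω := by
  have surplus_eq_zero : ∀ j, coveredCall v z j ω ∉ X → z j ∈ X → max (v j ω - z j) 0 = 0 := by
    intro j hκ hz
    refine max_eq_right (sub_nonpos.2 (le_of_not_ge fun hle ↦ hκ ?_))
    rwa [coveredCall, min_eq_right hle]
  unfold kappaThreshNet
  split
  case h_1 i hfind =>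
    simp only [Fin.find?_eq_some_iff, decide_eq_true_eq, decide_eq_false_iff_not] at hfind
    obtain ⟨hi, hω⟩ : coveredCall v z i ω ∈ X ∧ ω ∈ notHitBefore (coveredCall v z) X i := hfind
    have hzi : z i ∈ X := hX (min_le_right _ _) hi
    have surplus : ∑ j with z j ∈ X ∧ j ≤ i, max (v j ω - z j) 0 = max (v i ω - z i) 0 := by
      refine Finset.sum_eq_single_of_mem i (by simp [hzi]) fun j hj hji ↦ ?_
      obtain ⟨hzj, hle⟩ := (Finset.mem_filter_univ j).1 hj
      exact surplus_eq_zero j (hω j (hle.lt_of_ne hji)) hzj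
    simp only [Set.indicator_apply, mem_notHitBefore_iff_le hi hω]
    rw [← Finset.sum_filter, Finset.filter_filter, Finset.sum_sub_distrib, surplus,
      firstHitValue_of_mem hi hω, coveredCall, inf_eq_sub_posPart_sub, posPart_def]
    ring
  case h_2 hfind =>
    simp only [Fin.find?_eq_none_iff, decide_eq_false_iff_not] at hfind
    have miss : ∀ i, coveredCall v z i ω ∉ X := hfind
    rw [firstHitValue_of_forall_notMem miss, zero_add, ← Finset.sum_neg_distrib]
    refine Finset.sum_congr rfl fun j hj ↦ ?_
    have hω : ω ∈ notHitBefore (coveredCall v z) X j := fun k _ ↦ miss k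
    rw [Set.indicator_of_mem hω,
      surplus_eq_zero j (miss j) ((Finset.mem_filter_univ j).1 hj), zero_sub]

variable [MeasurableSpace Ω] {μ : Measure Ω}

section NotHitBefore

variable [Finite ι] [MeasurableSpace α] {X : Set α}

theorem nullMeasurableSet_notHitBefore {x : ι → Ω → α} (hx : ∀ i, AEMeasurable (x i) μ)
    (hX : MeasurableSet X) (i : ι) : NullMeasurableSet (notHitBefore x X i) μ := by
  have : notHitBefore x X i = ⋂ j ∈ Set.Iio i, x j ⁻¹' Xᶜ := by ext; simp [notHitBefore]
  rw [this]
  exact (Set.toFinite _).nullMeasurableSet_biInter fun j _ ↦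
    (hx j).nullMeasurableSet_preimage hX.compl

theorem setIntegral_notHitBefore_comp {β : ι → Type*} [∀ i, MeasurableSpace (β i)]
    {Y : ∀ i, Ω → β i} (hindep : iIndepFun Y μ) (hY : ∀ i, AEMeasurable (Y i) μ)
    {f : ∀ i, β i → α} (hf : ∀ i, Measurable (f i)) (hX : MeasurableSet X)
    (i : ι) {g : β i → ℝ} (hg : Measurable g) :
    ∫ ω in notHitBefore (fun j ω ↦ f j (Y j ω)) X i, g (Y i ω) ∂μ =
      μ.real (notHitBefore (fun j ω ↦ f j (Y j ω)) X i) * ∫ ω, g (Y i ω) ∂μ := by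
  classical
  cases nonempty_fintype ι
  let past : Finset ι := {j | j < i}
  let A : Set (∀ j : past, β j) := {y | ∀ j : past, f j (y j) ∉ X}
  have hA : MeasurableSet A := by
    rw [show A = ⋂ j : past, (fun y ↦ f j (y j)) ⁻¹' Xᶜ by ext; simp [A]]
    exact .iInter fun j ↦ ((hf j).comp (measurable_pi_apply j)) hX.compl
  have hpast : notHitBefore (fun j ω ↦ f j (Y j ω)) X i = (fun ω (j : past) ↦ Y j ω) ⁻¹' A := by
    ext ω
    simp [A, past, notHitBefore]
  have past_indep : IndepFun (fun ω (j : past) ↦ Y j ω) (Y i) μ :=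
    (hindep.indepFun_finset₀ past {i} (by simp [past]) hY).comp measurable_id
      (measurable_pi_apply (⟨i, by simp⟩ : ({i} : Finset ι)))
  rw [hpast]
  exact setIntegral_preimage_comp_eq_mul past_indep (aemeasurable_pi_lambda _ fun j ↦ hY j) (hY i)
    hA hg

end NotHitBefore

theorem integrable_firstHitValue [Fintype ι] {x : ι → Ω → ℝ} (hx : ∀ i, Integrable (x i) μ)
    {X : Set ℝ} (hX : MeasurableSet X) : Integrable (firstHitValue x X) μ := by
  refine integrable_finsetSum _ fun i _ ↦ Integrable.indicator₀ ?_
    (nullMeasurableSet_notHitBefore (fun i ↦ (hx i).aemeasurable) hX i)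
  exact (hx i).indicator₀ ((hx i).aemeasurable.nullMeasurableSet_preimage hX)

theorem integral_firstHitValue_Ioi [IsProbabilityMeasure μ] [Fintype ι] {x : ι → Ω → ℝ}
    (hindep : iIndepFun x μ) (hx : ∀ i, Integrable (x i) μ) (θ : ℝ) :
    ∫ ω, firstHitValue x (Set.Ioi θ) ω ∂μ =
      (1 - μ.real {ω | ∀ i, x i ω ≤ θ}) * θ +
        ∑ i, μ.real (notHitBefore x (Set.Ioi θ) i) * ∫ ω, max (x i ω - θ) 0 ∂μ := by
  have hmeas : ∀ i, AEMeasurable (x i) μ := fun i ↦ (hx i).aemeasurable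
  have hmiss : NullMeasurableSet {ω | ∀ i, x i ω ≤ θ} μ := by
    rw [Set.ofPred_forall]
    exact .iInter fun i ↦ (hmeas i).nullMeasurableSet_preimage measurableSet_Iic
  have hbefore := nullMeasurableSet_notHitBefore hmeas (measurableSet_Ioi (a := θ))
  have excess_integrable : ∀ i, Integrable
      ((notHitBefore x (Set.Ioi θ) i).indicator fun ω ↦ max (x i ω - θ) 0) μ := fun i ↦
    ((hx i).sub (integrable_const θ)).pos_part.indicator₀ (hbefore i)
  simp_rw [firstHitValue_Ioi]
  rw [integral_add ((integrable_const θ).indicator₀ hmiss.compl)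
      (integrable_finsetSum _ fun i _ ↦ excess_integrable i),
    integral_finsetSum _ fun i _ ↦ excess_integrable i, integral_indicator₀ hmiss.compl,
    setIntegral_const, probReal_compl_eq_one_sub₀ hmiss, smul_eq_mul]
  congr 1
  refine Finset.sum_congr rfl fun i _ ↦ ?_
  rw [integral_indicator₀ (hbefore i)]
  exact setIntegral_notHitBefore_comp hindep hmeas (fun _ ↦ measurable_id) measurableSet_Ioi i
    (g := fun t ↦ max (t - θ) 0) (by fun_prop)

theorem le_integral_firstHitValue_Ioi [IsProbabilityMeasure μ] [Fintype ι] [Nonempty ι]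
    {x : ι → Ω → ℝ} (hindep : iIndepFun x μ) (hx : ∀ i, Integrable (x i) μ) (θ : ℝ) :
    (1 - μ.real {ω | ∀ i, x i ω ≤ θ}) * θ +
        μ.real {ω | ∀ i, x i ω ≤ θ} * (∫ ω, ⨆ i, x i ω ∂μ - θ) ≤
      ∫ ω, firstHitValue x (Set.Ioi θ) ω ∂μ := by
  rw [integral_firstHitValue_Ioi hindep hx]
  gcongr
  calc μ.real {ω | ∀ i, x i ω ≤ θ} * (∫ ω, ⨆ i, x i ω ∂μ - θ)
      ≤ μ.real {ω | ∀ i, x i ω ≤ θ} * ∑ i, ∫ ω, max (x i ω - θ) 0 ∂μ := by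
        gcongr
        exact integral_ciSup_sub_le_sum_integral_max hx θ
    _ = ∑ i, μ.real {ω | ∀ i, x i ω ≤ θ} * ∫ ω, max (x i ω - θ) 0 ∂μ := Finset.mul_sum ..
    _ ≤ ∑ i, μ.real (notHitBefore x (Set.Ioi θ) i) * ∫ ω, max (x i ω - θ) 0 ∂μ :=
        Finset.sum_le_sum fun i _ ↦ mul_le_mul_of_nonneg_right
          (measureReal_mono fun ω hω j _ ↦ not_lt.2 (hω j))
          (integral_nonneg fun ω ↦ le_max_right _ _)

theorem prophet_inequality [IsProbabilityMeasure μ] [Fintype ι] [Nonempty ι]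
    {x : ι → Ω → ℝ} (hindep : iIndepFun x μ) (hx : ∀ i, Integrable (x i) μ) :
    1 / 2 * ∫ ω, ⨆ i, x i ω ∂μ ≤
      ∫ ω, firstHitValue x (Set.Ioi (1 / 2 * ∫ ω, ⨆ i, x i ω ∂μ)) ω ∂μ :=
  le_of_eq_of_le (by ring) (le_integral_firstHitValue_Ioi hindep hx _)

theorem integral_kappaThreshNet [IsProbabilityMeasure μ] {m : ℕ} {v : Fin m → Ω → ℝ}
    (hint : ∀ i, Integrable (v i) μ) (hindep : iIndepFun v μ) {z c : Fin m → ℝ}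
    (hstrike : ∀ i, ∫ ω, max (v i ω - z i) 0 ∂μ = c i) {X : Set ℝ} (hX : IsUpperSet X) :
    ∫ ω, kappaThreshNet (v · ω) z c X ∂μ = ∫ ω, firstHitValue (coveredCall v z) X ω ∂μ := by
  have hκ : ∀ i, Integrable (coveredCall v z i) μ := fun i ↦ integrable_coveredCall (hint i) z
  have hXmeas : MeasurableSet X := hX.ordConnected.measurableSet
  have hbefore := nullMeasurableSet_notHitBefore (fun i ↦ (hκ i).aemeasurable) hXmeas
  have surplus_integrable : ∀ i, Integrable (fun ω ↦ max (v i ω - z i) 0) μ := fun i ↦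
    ((hint i).sub (integrable_const (z i))).pos_part
  have netSurplus_integrable : ∀ i, Integrable ((notHitBefore (coveredCall v z) X i).indicator
      fun ω ↦ max (v i ω - z i) 0 - c i) μ := fun i ↦
    ((surplus_integrable i).sub (integrable_const (c i))).indicator₀ (hbefore i)
  have netSurplus_eq_zero : ∀ i, ∫ ω, (notHitBefore (coveredCall v z) X i).indicator
      (fun ω ↦ max (v i ω - z i) 0 - c i) ω ∂μ = 0 := by
    intro i
    have hsplit : ∫ ω in notHitBefore (coveredCall v z) X i, max (v i ω - z i) 0 - c i ∂μ = _ :=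
      setIntegral_notHitBefore_comp hindep (fun j ↦ (hint j).aemeasurable)
        (f := fun j t ↦ min t (z j)) (by fun_prop) hXmeas i
        (g := fun t ↦ max (t - z i) 0 - c i) (by fun_prop)
    rw [integral_sub (surplus_integrable i) (integrable_const (c i)), hstrike i, integral_const,
      probReal_univ, one_smul, sub_self, mul_zero] at hsplit
    rw [integral_indicator₀ (hbefore i), hsplit]
  simp_rw [kappaThreshNet_eq_firstHitValue_add v z c hX]
  rw [integral_add (integrable_firstHitValue hκ hXmeas)
      (integrable_finsetSum _ fun i _ ↦ netSurplus_integrable i),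
    integral_finsetSum _ fun i _ ↦ netSurplus_integrable i,
    Finset.sum_eq_zero fun i _ ↦ netSurplus_eq_zero i, add_zero]

theorem kappa_thresholding_half_general [IsProbabilityMeasure μ] {m : ℕ} (hm : 0 < m)
    {v : Fin m → Ω → ℝ} (hint : ∀ i, Integrable (v i) μ) (hindep : iIndepFun v μ)
    {z c : Fin m → ℝ} (hstrike : ∀ i, ∫ ω, max (v i ω - z i) 0 ∂μ = c i) :
    1 / 2 * ∫ ω, ⨆ i, min (v i ω) (z i) ∂μ ≤
      ∫ ω, kappaThreshNet (v · ω) z c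
        (Set.Ioi (1 / 2 * ∫ ω, ⨆ i, min (v i ω) (z i) ∂μ)) ∂μ := by
  have : Nonempty (Fin m) := ⟨⟨0, hm⟩⟩
  have hκ : ∀ i, Integrable (coveredCall v z i) μ := fun i ↦ integrable_coveredCall (hint i) z
  have hκ_indep : iIndepFun (coveredCall v z) μ :=
    hindep.comp (fun i t ↦ min t (z i)) (by fun_prop)
  rw [integral_kappaThreshNet hint hindep hstrike (isUpperSet_Ioi _)]
  exact prophet_inequality hκ_indep hκ

end FirstHit

/-- In the box problem with boxes considered in the fixed exogenous
order `1,…,m` (independent nonnegative prizes `v i`, opening costs `c i ≥ 0`, strike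
prices `z i` with `E[(v i − z i)^+] = c i`, covered call values
`κ i = min (v i) (z i)`), there exists a half-infinite target interval `X = (θ,∞)` or
`X = [θ,∞)` such that the `κ`-thresholding policy with target interval `X` has
expected net value at least `(1/2)·E[max_i κ_i]`; since `E[max_i κ_i]` bounds the
expected net value of any sequential search procedure (even one free to choose the
order of the boxes), this policy attains at least half the expected net value of the
optimal search procedure. -/
theorem kappa_thresholding_half {Ω : Type*} [MeasurableSpace Ω]
    (μ : Measure Ω) [IsProbabilityMeasure μ]
    (m : ℕ) (hm : 0 < m) (v : Fin m → Ω → ℝ)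
    (hmeas : ∀ i, Measurable (v i))
    (hnonneg : ∀ i ω, 0 ≤ v i ω)
    (hint : ∀ i, Integrable (v i) μ)
    (hindep : iIndepFun v μ)
    (z c : Fin m → ℝ) (hc_nonneg : ∀ i, 0 ≤ c i)
    (hstrike : ∀ i, ∫ ω, max (v i ω - z i) 0 ∂μ = c i) :
    ∃ X : Set ℝ, ((∃ θ, X = Set.Ioi θ) ∨ (∃ θ, X = Set.Ici θ)) ∧
      (1 / 2) * (∫ ω, (⨆ i, min (v i ω) (z i)) ∂μ)
        ≤ ∫ ω, kappaThreshNet (fun i => v i ω) z c X ∂μ := by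
  exact ⟨_, .inl ⟨_, rfl⟩, kappa_thresholding_half_general hm hint hindep hstrike⟩
end

section
/- In the binary model of delegated search, there exists a half-infinite interval X of the form (θ,∞) or [θ,∞) with θ ≥ 0 such that the following delegated process has expected net value at least (1/2)·E[max(0, max_{1≤i≤m} κ_i)]: the agent tests the solutions in { i : z_i ∈ X } one at a time in nonincreasing order of w_i = y_i − c_i/p_i (paying cost c_i for each test), stops at the first solution found to be feasible and proposes it, and the principal adopts the proposal; the net value is the principal's value x_i of the adopted solution (0 if no tested solution is feasible) minus the total testing cost incurred. Since E[max(0, max_i κ_i)] is an upper bound on the expected net value of any sequential search the principal could perform herself, this mechanism attains at least half the expected net value of the principal's optimal autonomous search. -/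
open MeasureTheory ProbabilityTheory

open Classical in
/-- The realized net value of the delegated search process in the binary model, for a
realized feasibility pattern `feas`, when the principal's eligible set consists of the
feasible solutions with `z i ∈ X` and the agent tests the solutions `{i : z i ∈ X}`
in the order `π 0, π 1, …` (an ordering by nonincreasing agent priority `w`), paying
`c i` for each test, stopping at the first solution found feasible and proposing it
(which the principal adopts): the net value is the principal's value `x` of the
adopted solution (`0` if no tested solution is feasible) minus the total testing
cost incurred. -/
noncomputable def delegatedBinaryNet {m : ℕ} (feas : Fin m → Prop) (x z c : Fin m → ℝ)
    (π : Equiv.Perm (Fin m)) (X : Set ℝ) : ℝ :=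
  match Fin.find? (fun k => z (π k) ∈ X ∧ feas (π k)) with
  | some k =>
      x (π k) - ∑ l ∈ Finset.univ.filter (fun l : Fin m => z (π l) ∈ X ∧ l ≤ k), c (π l)
  | none => - ∑ l ∈ Finset.univ.filter (fun l : Fin m => z (π l) ∈ X), c (π l)

/-!
Choose `θ` as the fixed point of `θ ↦ E[∑ᵢ (κᵢ - θ)⁺] = ∑ᵢ pᵢ (zᵢ - θ)⁺`, as in the prophet
inequality. Pathwise `max (0, maxᵢ κᵢ) ≤ θ + ∑ᵢ (κᵢ - θ)⁺`, so the expectation of the left-hand side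
is at most `2θ`. On the other side, since `pᵢ xᵢ - cᵢ = pᵢ zᵢ`, testing `i` earns `pᵢ θ` and a
surplus `pᵢ (zᵢ - θ)⁺` in expectation. Let `q` be the probability that no eligible solution is
feasible. The parts `pᵢ θ` add up to `(1 - q) θ`, and as each test is reached with probability at
least `q`, the surpluses add up to at least `q θ`. So the process earns at least `θ`.
-/

open Finset in
/-- The net value of testing the elements of `s` in increasing order up to the first success, where
success of `k` is worth `x k` and its test costs `c k`, written as a multiaffine polynomial in `f`
so that it serves twice: at the indicators of success it is the realized value, at the success
probabilities of independent tests it is the expected value. The product is the weight of the event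
that the test of `k` takes place. -/
def sequentialNet {ι : Type*} [LinearOrder ι] (s : Finset ι) (x c f : ι → ℝ) : ℝ :=
  ∑ k ∈ s, (∏ j ∈ s with j < k, (1 - f j)) * (f k * x k - c k)

section SequentialNet

open Finset

variable {ι : Type*} [LinearOrder ι] {s : Finset ι} {x c f : ι → ℝ}

theorem sequentialNet_of_forall_eq_zero (hf : ∀ j ∈ s, f j = 0) :
    sequentialNet s x c f = -∑ k ∈ s, c k := by
  rw [sequentialNet, ← sum_neg_distrib]
  refine sum_congr rfl fun k hk => ?_
  have hprod : ∏ j ∈ s with j < k, (1 - f j) = 1 :=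
    prod_eq_one fun j hj => by rw [hf j (mem_filter.mp hj).1, sub_zero]
  rw [hprod, hf k hk]
  ring

theorem prod_one_sub_eq_ite_of_first_success {k : ι} (hk : k ∈ s) (hfk : f k = 1)
    (hf : ∀ j ∈ s, j < k → f j = 0) (l : ι) :
    ∏ j ∈ s with j < l, (1 - f j) = if l ≤ k then 1 else 0 := by
  split_ifs with hlk
  · refine prod_eq_one fun j hj => ?_
    obtain ⟨hjs, hjl⟩ := mem_filter.mp hj
    rw [hf j hjs (hjl.trans_le hlk), sub_zero]
  · exact prod_eq_zero (mem_filter.mpr ⟨hk, not_le.mp hlk⟩) (by rw [hfk, sub_self])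

theorem sequentialNet_of_first_success {k : ι} (hk : k ∈ s) (hfk : f k = 1)
    (hf : ∀ j ∈ s, j < k → f j = 0) :
    sequentialNet s x c f = x k - ∑ l ∈ s with l ≤ k, c l := by
  have hreward : ∑ l ∈ s with l ≤ k, f l * x l = x k := by
    rw [sum_eq_single_of_mem k (by simpa using hk), hfk, one_mul]
    intro l hl hne
    obtain ⟨hls, hlk⟩ := mem_filter.mp hl
    rw [hf l hls (hlk.lt_of_ne hne), zero_mul]
  simp only [sequentialNet, prod_one_sub_eq_ite_of_first_success hk hfk hf, ite_mul, one_mul,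
    zero_mul]
  rw [← sum_filter, sum_sub_distrib, hreward]

theorem le_sequentialNet {θ : ℝ} (hf : ∀ k ∈ s, f k ∈ Set.Icc 0 1)
    (hsurplus : ∀ k ∈ s, 0 ≤ f k * (x k - θ) - c k)
    (hθ : θ ≤ ∑ k ∈ s, (f k * (x k - θ) - c k)) :
    θ ≤ sequentialNet s x c f := by
  let reach (k : ι) : ℝ := ∏ j ∈ s with j < k, (1 - f j)
  let q : ℝ := ∏ j ∈ s, (1 - f j)
  have hfactor_nonneg (j : ι) (hj : j ∈ s) : 0 ≤ 1 - f j := sub_nonneg.mpr (hf j hj).2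
  have hfactor_le_one (j : ι) (hj : j ∈ s) : 1 - f j ≤ 1 := sub_le_self _ (hf j hj).1
  have hq_nonneg : 0 ≤ q := prod_nonneg hfactor_nonneg
  have hq_le_reach (k : ι) : q ≤ reach k :=
    prod_le_prod_of_subset_of_le_one (filter_subset _ _) hfactor_nonneg
      fun j hj _ => hfactor_le_one j hj
  have hq : q = 1 - ∑ k ∈ s, f k * reach k := prod_one_sub_ordered s f
  calc θ = (∑ k ∈ s, f k * reach k) * θ + q * θ := by rw [hq]; ring
    _ ≤ (∑ k ∈ s, f k * reach k) * θ + q * ∑ k ∈ s, (f k * (x k - θ) - c k) := by gcongr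
    _ ≤ (∑ k ∈ s, f k * reach k) * θ + ∑ k ∈ s, reach k * (f k * (x k - θ) - c k) := by
      rw [mul_sum]
      gcongr with k hk
      · exact hsurplus k hk
      · exact hq_le_reach k
    _ = sequentialNet s x c f := by
      rw [sequentialNet, sum_mul, ← sum_add_distrib]
      exact sum_congr rfl fun k _ => by ring

end SequentialNet

section Independence

variable {Ω ι : Type*} [MeasurableSpace Ω] {μ : Measure Ω} {F : ι → Ω → ℝ}

theorem integrable_finsetProd_of_iIndepFun (hF : iIndepFun F μ)
    (hint : ∀ i, Integrable (F i) μ) (s : Finset ι) :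
    Integrable (fun ω => ∏ i ∈ s, F i ω) μ := by
  classical
  have := hF.isProbabilityMeasure
  induction s using Finset.induction_on with
  | empty => simp
  | insert k s hk ih =>
    have hindep : IndepFun (fun ω => ∏ i ∈ s, F i ω) (F k) μ := by
      simpa only [Finset.prod_fn] using
        hF.indepFun_finsetProd_of_notMem₀ (fun i => (hint i).aemeasurable) hk
    simpa only [Finset.prod_insert hk, Pi.mul_def] using hindep.symm.integrable_mul (hint k) ih

theorem integral_finsetProd_of_iIndepFun (hF : iIndepFun F μ)
    (hF_meas : ∀ i, AEStronglyMeasurable (F i) μ) (s : Finset ι) :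
    ∫ ω, ∏ i ∈ s, F i ω ∂μ = ∏ i ∈ s, ∫ ω, F i ω ∂μ := by
  simp only [← Finset.prod_coe_sort s]
  exact (hF.precomp Subtype.val_injective).integral_fun_prod_eq_prod_integral fun i => hF_meas i

theorem integral_sequentialNet [LinearOrder ι] (hF : iIndepFun F μ)
    (hint : ∀ i, Integrable (F i) μ) (s : Finset ι) (x c : ι → ℝ) :
    ∫ ω, sequentialNet s x c (fun i => F i ω) ∂μ =
      sequentialNet s x c (fun i => ∫ ω, F i ω ∂μ) := by
  have := hF.isProbabilityMeasure
  have hG : iIndepFun (fun i ω => 1 - F i ω) μ :=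
    hF.comp (fun _ u => 1 - u) fun _ => by fun_prop
  have hG_int (i : ι) : Integrable (fun ω => 1 - F i ω) μ := (integrable_const 1).sub (hint i)
  have hnet_int (k : ι) : Integrable (fun ω => F k ω * x k - c k) μ :=
    ((hint k).mul_const _).sub (integrable_const _)
  have hreach_int (t : Finset ι) := integrable_finsetProd_of_iIndepFun hG hG_int t
  have hindep (k : ι) :
      IndepFun (fun ω => ∏ j ∈ s with j < k, (1 - F j ω)) (fun ω => F k ω * x k - c k) μ := by
    have h := (hG.indepFun_finsetProd_of_notMem₀ (s := {j ∈ s | j < k}) (i := k)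
      (fun j => (hG_int j).aemeasurable) (by simp)).comp measurable_id
      (by fun_prop : Measurable fun u : ℝ => (1 - u) * x k - c k)
    simpa only [Function.comp_def, id, Finset.prod_apply, sub_sub_cancel] using h
  have hterm_int (k : ι) :
      Integrable (fun ω => (∏ j ∈ s with j < k, (1 - F j ω)) * (F k ω * x k - c k)) μ :=
    (hindep k).integrable_mul (hreach_int _) (hnet_int k)
  unfold sequentialNet
  rw [integral_finsetSum _ fun k _ => hterm_int k]
  refine Finset.sum_congr rfl fun k _ => ?_
  rw [(hindep k).integral_fun_mul_eq_mul_integral (hreach_int _).aestronglyMeasurable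
      (hnet_int k).aestronglyMeasurable,
    integral_finsetProd_of_iIndepFun hG fun i => (hG_int i).aestronglyMeasurable,
    integral_sub ((hint k).mul_const _) (integrable_const _), integral_mul_const]
  simp only [integral_sub (integrable_const _) (hint _), integral_const, probReal_univ, one_smul]

end Independence

section FiniteValued

variable {Ω : Type*} [MeasurableSpace Ω] {μ : Measure Ω}

theorem integral_ite_one_zero {f : Ω → Bool} (hf : Measurable f) :
    ∫ ω, (if f ω = true then (1 : ℝ) else 0) ∂μ = μ.real {ω | f ω = true} := by
  have hset : MeasurableSet {ω | f ω = true} := hf (measurableSet_singleton true)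
  simpa [Set.indicator_apply] using integral_indicator_one (μ := μ) hset

variable [IsFiniteMeasure μ]

theorem integrable_comp_of_finite {α : Type*} [MeasurableSpace α] [MeasurableSingletonClass α]
    [Finite α] {f : Ω → α} (hf : Measurable f) (g : α → ℝ) : Integrable (fun ω => g (f ω)) μ :=
  Integrable.of_finite.comp_measurable hf

theorem integral_coveredCall_excess_le {f : Ω → Bool} (hf : Measurable f) {θ : ℝ} (hθ : 0 ≤ θ)
    (x z : ℝ) :
    ∫ ω, max (min (if f ω then x else 0) z - θ) 0 ∂μ ≤
      μ.real {ω | f ω = true} * max (z - θ) 0 := by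
  rw [← integral_ite_one_zero hf, ← integral_mul_const]
  refine integral_mono
    (integrable_comp_of_finite hf fun b => max (min (if b then x else 0) z - θ) 0)
    (integrable_comp_of_finite hf fun b => (if b = true then 1 else 0) * max (z - θ) 0)
    fun ω => ?_
  cases f ω with
  | false => simp [hθ]
  | true =>
    simp only [if_true, one_mul]
    gcongr
    exact min_le_right x z

end FiniteValued

section Benchmark

theorem max_zero_iSup_le_add_sum {ι : Type*} [Fintype ι] {θ : ℝ} (hθ : 0 ≤ θ) (v : ι → ℝ) :
    max 0 (⨆ i, v i) ≤ θ + ∑ i, max (v i - θ) 0 := by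
  have hexcess (i : ι) : 0 ≤ max (v i - θ) 0 := le_max_right _ _
  have hbound : 0 ≤ θ + ∑ i, max (v i - θ) 0 :=
    add_nonneg hθ (Finset.sum_nonneg fun i _ => hexcess i)
  refine max_le hbound (Real.iSup_le (fun i => ?_) hbound)
  have := Finset.single_le_sum (fun i _ => hexcess i) (Finset.mem_univ i)
  linarith [le_max_left (v i - θ) 0]

variable {Ω ι : Type*} [MeasurableSpace Ω] {μ : Measure Ω} [IsProbabilityMeasure μ] [Fintype ι]

theorem integral_max_zero_iSup_le {θ : ℝ} (hθ : 0 ≤ θ) {v : ι → Ω → ℝ}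
    (hv : ∀ i, Integrable (v i) μ) :
    ∫ ω, max 0 (⨆ i, v i ω) ∂μ ≤ θ + ∑ i, ∫ ω, max (v i ω - θ) 0 ∂μ := by
  have hexcess (i : ι) : Integrable (fun ω => max (v i ω - θ) 0) μ :=
    ((hv i).sub (integrable_const θ)).pos_part
  have hsum : Integrable (fun ω => ∑ i, max (v i ω - θ) 0) μ :=
    integrable_finsetSum _ fun i _ => hexcess i
  calc ∫ ω, max 0 (⨆ i, v i ω) ∂μ ≤ ∫ ω, (θ + ∑ i, max (v i ω - θ) 0) ∂μ :=
        integral_mono_of_nonneg (.of_forall fun ω => le_max_left _ _)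
          ((integrable_const θ).add hsum)
          (.of_forall fun ω => max_zero_iSup_le_add_sum hθ fun i => v i ω)
    _ = θ + ∑ i, ∫ ω, max (v i ω - θ) 0 ∂μ := by
      rw [integral_add (integrable_const θ) hsum, integral_finsetSum _ fun i _ => hexcess i]
      simp

theorem integral_max_zero_iSup_coveredCall_le {feas : ι → Ω → Bool}
    (hfeas : ∀ i, Measurable (feas i)) {θ : ℝ} (hθ : 0 ≤ θ) (x z : ι → ℝ) :
    ∫ ω, max 0 (⨆ i, min (if feas i ω then x i else 0) (z i)) ∂μ ≤
      θ + ∑ i, μ.real {ω | feas i ω = true} * max (z i - θ) 0 :=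
  calc _ ≤ θ + ∑ i, ∫ ω, max (min (if feas i ω then x i else 0) (z i) - θ) 0 ∂μ :=
        integral_max_zero_iSup_le hθ fun i =>
          integrable_comp_of_finite (hfeas i) fun b => min (if b then x i else 0) (z i)
    _ ≤ _ := by
      gcongr with i
      exact integral_coveredCall_excess_le (hfeas i) hθ (x i) (z i)

end Benchmark

theorem exists_nonneg_isFixedPt_of_antitone {A : ℝ → ℝ} (hcont : Continuous A)
    (hanti : Antitone A) (h0 : 0 ≤ A 0) : ∃ θ, 0 ≤ θ ∧ Function.IsFixedPt A θ := by
  obtain ⟨θ, hθ, hfix⟩ := exists_mem_Icc_isFixedPt hcont.continuousOn h0 h0 (hanti h0)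
  exact ⟨θ, hθ.1, hfix⟩

theorem exists_balanced_threshold {ι : Type*} [Fintype ι] {p : ι → ℝ} (hp : ∀ i, 0 ≤ p i)
    (z : ι → ℝ) : ∃ θ, 0 ≤ θ ∧ ∑ i, p i * max (z i - θ) 0 = θ := by
  refine exists_nonneg_isFixedPt_of_antitone (A := fun θ => ∑ i, p i * max (z i - θ) 0)
    (by fun_prop) (fun a b hab => ?_)
    (Finset.sum_nonneg fun i _ => mul_nonneg (hp i) (le_max_right _ _))
  dsimp only
  gcongr with i
  exact hp i

section Mechanism

open Classical in
theorem delegatedBinaryNet_eq_sequentialNet {m : ℕ} (feas : Fin m → Prop) [DecidablePred feas]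
    (x z c : Fin m → ℝ) (π : Equiv.Perm (Fin m)) (X : Set ℝ) :
    delegatedBinaryNet feas x z c π X =
      sequentialNet {k | z (π k) ∈ X} (x ∘ π) (c ∘ π)
        (fun k => if feas (π k) then 1 else 0) := by
  unfold delegatedBinaryNet
  split
  next k hk =>
    simp only [Fin.find?_eq_some_iff, decide_eq_true_eq, decide_eq_false_iff_not] at hk
    obtain ⟨⟨hkX, hk_feas⟩, hk_first⟩ := hk
    rw [sequentialNet_of_first_success (k := k) (by simpa using hkX) (if_pos hk_feas)
      fun j hj hjk => if_neg fun hj_feas => hk_first j hjk ⟨by simpa using hj, hj_feas⟩,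
      Finset.filter_filter]
    rfl
  next hnone =>
    simp only [Fin.find?_eq_none_iff, decide_eq_false_iff_not] at hnone
    rw [sequentialNet_of_forall_eq_zero fun j hj => if_neg fun hj_feas =>
      hnone j ⟨by simpa using hj, hj_feas⟩]
    rfl

variable {Ω : Type*} [MeasurableSpace Ω] {μ : Measure Ω} {m : ℕ} {feas : Fin m → Ω → Bool}

open Classical in
theorem integral_delegatedBinaryNet (hfeas_meas : ∀ i, Measurable (feas i))
    (hfeas_indep : iIndepFun feas μ) (x z c : Fin m → ℝ) (π : Equiv.Perm (Fin m)) (X : Set ℝ) :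
    ∫ ω, delegatedBinaryNet (fun i => feas i ω = true) x z c π X ∂μ =
      sequentialNet {k | z (π k) ∈ X} (x ∘ π) (c ∘ π)
        (fun k => μ.real {ω | feas (π k) ω = true}) := by
  have := hfeas_indep.isProbabilityMeasure
  let success (b : Bool) : ℝ := if b = true then 1 else 0
  have hindep : iIndepFun (fun k ω => success (feas (π k) ω)) μ :=
    (hfeas_indep.precomp π.injective).comp (fun _ => success) fun _ => measurable_of_finite _
  have hint (k : Fin m) : Integrable (fun ω => success (feas (π k) ω)) μ :=
    integrable_comp_of_finite (hfeas_meas (π k)) success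
  simp only [delegatedBinaryNet_eq_sequentialNet, ← integral_ite_one_zero (hfeas_meas _)]
  exact integral_sequentialNet hindep hint _ _ _

theorem le_integral_delegatedBinaryNet (hfeas_meas : ∀ i, Measurable (feas i))
    (hfeas_indep : iIndepFun feas μ) {x z c : Fin m → ℝ}
    (hz : ∀ i, μ.real {ω | feas i ω = true} * x i - c i = μ.real {ω | feas i ω = true} * z i)
    {θ : ℝ} (hθ : θ ≤ ∑ i, μ.real {ω | feas i ω = true} * max (z i - θ) 0) {X : Set ℝ}
    (hIoi : Set.Ioi θ ⊆ X) (hIci : X ⊆ Set.Ici θ) (π : Equiv.Perm (Fin m)) :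
    θ ≤ ∫ ω, delegatedBinaryNet (fun i => feas i ω = true) x z c π X ∂μ := by
  classical
  have := hfeas_indep.isProbabilityMeasure
  let p (i : Fin m) : ℝ := μ.real {ω | feas i ω = true}
  have hsurplus (i : Fin m) (hi : z i ∈ X) :
      p i * max (z i - θ) 0 = p i * (x i - θ) - c i := by
    rw [max_eq_left (sub_nonneg.mpr (hIci hi))]
    linear_combination -hz i
  have hexcluded (i : Fin m) (hi : z i ∉ X) : p i * max (z i - θ) 0 = 0 := by
    rw [max_eq_right (sub_nonpos.mpr (not_lt.mp fun h => hi (hIoi h))), mul_zero]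
  rw [integral_delegatedBinaryNet hfeas_meas hfeas_indep]
  refine le_sequentialNet (fun k _ => ⟨measureReal_nonneg, measureReal_le_one⟩)
    (fun k hk => ?_) ?_
  · rw [Function.comp_apply, Function.comp_apply, ← hsurplus (π k) (by simpa using hk)]
    exact mul_nonneg measureReal_nonneg (le_max_right _ _)
  · calc θ ≤ ∑ k, p (π k) * max (z (π k) - θ) 0 := hθ.trans_eq (Equiv.sum_comp π _).symm
      _ = ∑ k with z (π k) ∈ X, p (π k) * max (z (π k) - θ) 0 :=
        (Finset.sum_filter_of_ne fun k _ hne => not_imp_comm.mp (hexcluded (π k)) hne).symm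
      _ = _ := Finset.sum_congr rfl fun k hk => hsurplus (π k) (by simpa using hk)

end Mechanism

theorem delegated_binary_half_general {Ω : Type*} [MeasurableSpace Ω]
    (μ : Measure Ω) (m : ℕ) (p x c : Fin m → ℝ) (hp : ∀ i, 0 < p i)
    (feas : Fin m → Ω → Bool)
    (hfeas_meas : ∀ i, Measurable (feas i))
    (hfeas_indep : iIndepFun feas μ)
    (hfeas_p : ∀ i, μ {ω | feas i ω = true} = ENNReal.ofReal (p i))
    (zz : Fin m → ℝ) (hzz : ∀ i, zz i = x i - c i / p i) :
    ∃ θ : ℝ, 0 ≤ θ ∧ ∀ X : Set ℝ, Set.Ioi θ ⊆ X → X ⊆ Set.Ici θ → ∀ π : Equiv.Perm (Fin m),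
      (1 / 2) * (∫ ω, max 0 (⨆ i, min (if feas i ω then x i else 0) (zz i)) ∂μ)
        ≤ ∫ ω, delegatedBinaryNet (fun i => feas i ω = true) x zz c π X ∂μ := by
  have := hfeas_indep.isProbabilityMeasure
  have hp_real (i : Fin m) : μ.real {ω | feas i ω = true} = p i := by
    rw [measureReal_def, hfeas_p, ENNReal.toReal_ofReal (hp i).le]
  have hz (i : Fin m) : p i * x i - c i = p i * zz i := by
    rw [hzz, mul_sub, mul_div_cancel₀ _ (hp i).ne']
  obtain ⟨θ, hθ_nonneg, hθ⟩ := exists_balanced_threshold (fun i => (hp i).le) zz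
  refine ⟨θ, hθ_nonneg, fun X hIoi hIci π => ?_⟩
  have hbenchmark := integral_max_zero_iSup_coveredCall_le (μ := μ) hfeas_meas hθ_nonneg x zz
  have hmechanism := le_integral_delegatedBinaryNet hfeas_meas hfeas_indep
    (by simpa only [hp_real] using hz) (by simpa only [hp_real] using hθ.ge) hIoi hIci π
  simp only [hp_real, hθ] at hbenchmark
  linarith

/-- In the binary model of delegated search (`m` solutions; solution
`i` feasible independently with probability `p i ∈ (0,1]`, yielding known utilities
`x i ≥ 0` to the principal and `y i ≥ 0` to the agent if feasible and `0` otherwise;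
testing feasibility costs `c i` with `0 ≤ c i ≤ p i · y i`; priorities
`z i = x i − c i / p i` and `w i = y i − c i / p i`; prize
`v i = x i · 1{i feasible}` and covered call value `κ i = min (v i) (z i)`),
there is a half-infinite interval `X = (θ,∞)` or `[θ,∞)` with `θ ≥ 0` such that for
every ordering `π` of the solutions by nonincreasing `w`, the delegated process —
the agent tests the solutions `{i : z i ∈ X}` in the order `π`, stopping at the
first feasible one, which the principal adopts — has expected net value at least
`(1/2)·E[max(0, max_i κ_i)]`.  Since `E[max(0, max_i κ_i)]` bounds the expected net
value of any sequential search the principal could perform herself, this mechanism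
attains at least half the expected net value of the principal's optimal autonomous
search. -/
theorem delegated_binary_half {Ω : Type*} [MeasurableSpace Ω]
    (μ : Measure Ω) [IsProbabilityMeasure μ]
    (m : ℕ) (hm : 0 < m)
    (p x y c : Fin m → ℝ)
    (hp : ∀ i, p i ∈ Set.Ioc (0:ℝ) 1)
    (hx : ∀ i, 0 ≤ x i) (hy : ∀ i, 0 ≤ y i)
    (hc : ∀ i, 0 ≤ c i ∧ c i ≤ p i * y i)
    (feas : Fin m → Ω → Bool)
    (hfeas_meas : ∀ i, Measurable (feas i))
    (hfeas_indep : iIndepFun feas μ)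
    (hfeas_p : ∀ i, μ {ω | feas i ω = true} = ENNReal.ofReal (p i))
    (zz ww : Fin m → ℝ)
    (hzz : ∀ i, zz i = x i - c i / p i)
    (hww : ∀ i, ww i = y i - c i / p i) :
    ∃ θ : ℝ, 0 ≤ θ ∧ ∃ X : Set ℝ, (X = Set.Ioi θ ∨ X = Set.Ici θ) ∧
      ∀ π : Equiv.Perm (Fin m),
        (∀ k l : Fin m, k ≤ l → ww (π l) ≤ ww (π k)) →
        (1 / 2) * (∫ ω, max 0 (⨆ i, min (if feas i ω then x i else 0) (zz i)) ∂μ)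
          ≤ ∫ ω, delegatedBinaryNet (fun i => feas i ω = true) x zz c π X ∂μ := by
  obtain ⟨θ, hθ_nonneg, hθ⟩ := delegated_binary_half_general μ m p x c (fun i => (hp i).1) feas
    hfeas_meas hfeas_indep hfeas_p zz hzz
  exact ⟨θ, hθ_nonneg, Set.Ici θ, Or.inr rfl,
    fun π _ => hθ _ Set.Ioi_subset_Ici_self subset_rfl π⟩
end

section
/- Suppose the principal's and agent's utilities are independent: the agent draws n i.i.d. samples (x_1,y_1),…,(x_n,y_n) where x_i and y_i are independent, x_i has continuous (atomless) cumulative distribution function F, and the y_i are drawn from an arbitrary atomless distribution. Let θ satisfy F(θ) = exp(−1/n). Then the single-proposal mechanism with eligible set {(x,y) : x > θ}, under which the agent proposes the eligible sample with maximum y-value (proposing nothing if no sample is eligible), guarantees the principal expected utility at least (1 − 1/e)·E[max_{1≤i≤n} x_i]. -/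
open MeasureTheory ProbabilityTheory

/-!
Let `x i` be the principal's values, with common law `ν`, and put `p = ν (θ, ∞)`.

* Since `max x ≤ θ + ∑ i, (x i - θ)⁺` and `n * p ≤ 1`, integrating gives
  `p * E[max x] ≤ ∫ x in (θ, ∞), x ∂ν`, that is, `E[max x] ≤ E[x | x > θ]`.
* Whether the agent ranks sample `i` above all other eligible samples does not depend on `x i`.
  As ties between the agent's utilities have probability `0`, the accepted value is distributed as
  `x` given `x > θ`, and the principal gets `E[x | x > θ]` times the probability that some sample is
  eligible, which is `1 - exp (-1 / n) ^ n = 1 - 1 / e`.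
-/

section Independence

variable {Ω α β γ ι : Type*} [MeasurableSpace Ω] [MeasurableSpace α] [MeasurableSpace β]
  [MeasurableSpace γ] {μ : Measure Ω}

lemma indepFun_prodMk_assoc [IsFiniteMeasure μ] {X : Ω → α} {Y : Ω → β} {Z : Ω → γ}
    (hX : AEMeasurable X μ) (hY : AEMeasurable Y μ) (hZ : AEMeasurable Z μ)
    (hXY : IndepFun X Y μ) (hXYZ : IndepFun (fun ω => (X ω, Y ω)) Z μ) :
    IndepFun X (fun ω => (Y ω, Z ω)) μ := by
  have hYZ : IndepFun Y Z μ := hXYZ.comp measurable_snd measurable_id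
  rw [indepFun_iff_map_prod_eq_prod_map_map (by fun_prop) (by fun_prop)]
    at hXY hXYZ hYZ ⊢
  calc μ.map (fun ω => (X ω, Y ω, Z ω))
      = (μ.map fun ω => ((X ω, Y ω), Z ω)).map MeasurableEquiv.prodAssoc :=
        (AEMeasurable.map_map_of_aemeasurable MeasurableEquiv.prodAssoc.measurable.aemeasurable
          ((hX.prodMk hY).prodMk hZ)).symm
    _ = (((μ.map X).prod (μ.map Y)).prod (μ.map Z)).map MeasurableEquiv.prodAssoc := by
        rw [hXYZ, hXY]
    _ = (μ.map X).prod (μ.map fun ω => (Y ω, Z ω)) := by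
        rw [Measure.prodAssoc_prod, hYZ]

lemma indepFun_fst_prodMk_snd_others [Finite ι] {s : ι → Ω → α × β}
    (hmeas : ∀ i, Measurable (s i)) (hindep : iIndepFun s μ) {i : ι}
    (hi : IndepFun (fun ω => (s i ω).1) (fun ω => (s i ω).2) μ) :
    IndepFun (fun ω => (s i ω).1) (fun ω => ((s i ω).2, fun j : {j // j ≠ i} => s j ω)) μ := by
  classical
  have := Fintype.ofFinite ι
  have := hindep.isProbabilityMeasure
  have hblocks := hindep.indepFun_finset {i} {i}ᶜ disjoint_compl_right hmeas
  have hothers : IndepFun (s i) (fun ω (j : {j // j ≠ i}) => s j ω) μ :=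
    hblocks.comp (φ := fun f : ({i} : Finset ι) → α × β => f ⟨i, Finset.mem_singleton_self i⟩)
      (ψ := fun (f : ({i}ᶜ : Finset ι) → α × β) (j : {j // j ≠ i}) => f ⟨j, by simpa using j.2⟩)
      (by fun_prop) (by fun_prop)
  exact indepFun_prodMk_assoc (by fun_prop) (by fun_prop) (by fun_prop) hi hothers

lemma ae_ne_of_indepFun [MeasurableEq β] [IsFiniteMeasure μ] {X Y : Ω → β}
    (hX : AEMeasurable X μ) (hY : AEMeasurable Y μ) (h : IndepFun X Y μ)
    (hY_atomless : ∀ c, μ {ω | Y ω = c} = 0) : ∀ᵐ ω ∂μ, X ω ≠ Y ω := by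
  have hdiag : MeasurableSet (Set.diagonal β) := measurableSet_diagonal
  have hnull : μ.map (fun ω => (X ω, Y ω)) (Set.diagonal β) = 0 := by
    rw [(indepFun_iff_map_prod_eq_prod_map_map hX hY).1 h, Measure.measure_prod_null hdiag]
    refine .of_forall fun c => ?_
    have hslice : Prod.mk c ⁻¹' Set.diagonal β = {c} := by ext; simp [eq_comm]
    simpa [hslice, Measure.map_apply_of_aemeasurable hY, Set.preimage] using hY_atomless c
  rwa [Measure.map_apply_of_aemeasurable (by fun_prop) hdiag, measure_eq_zero_iff_ae_notMem]
    at hnull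

lemma ae_injective_of_iIndepFun [MeasurableEq β] [Countable ι] {Y : ι → Ω → β}
    (hY : ∀ i, AEMeasurable (Y i) μ) (hindep : iIndepFun Y μ)
    (hY_atomless : ∀ i c, μ {ω | Y i ω = c} = 0) :
    ∀ᵐ ω ∂μ, Function.Injective fun i => Y i ω := by
  have := hindep.isProbabilityMeasure
  have hne : ∀ᵐ ω ∂μ, ∀ i j, i ≠ j → Y i ω ≠ Y j ω := by
    simp only [ae_all_iff]
    exact fun i j hij =>
      ae_ne_of_indepFun (hY i) (hY j) (hindep.indepFun hij) (hY_atomless j)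
  filter_upwards [hne] with ω hω i j hij
  exact not_imp_not.1 (hω i j) hij

lemma integrable_comp_of_hasLaw {E : Type*} [NormedAddCommGroup E] {X : Ω → α} {ν : Measure α}
    (hlaw : HasLaw X ν μ) {f : α → E} (hf : Integrable f ν) : Integrable (fun ω => f (X ω)) μ :=
  (hlaw.map_eq ▸ hf).comp_aemeasurable hlaw.aemeasurable

lemma measureReal_exists_lt_eq_one_sub_pow [Fintype ι] {X : ι → Ω → ℝ} {ν : Measure ℝ}
    (hindep : iIndepFun X μ) (hlaw : ∀ i, HasLaw (X i) ν μ) (θ : ℝ) :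
    μ.real {ω | ∃ i, θ < X i ω} = 1 - ν.real (Set.Iic θ) ^ Fintype.card ι := by
  have := hindep.isProbabilityMeasure
  have hnone : μ.real (⋂ i, X i ⁻¹' Set.Iic θ) = ν.real (Set.Iic θ) ^ Fintype.card ι := by
    have h := hindep.measure_inter_preimage_eq_mul (S := Finset.univ)
      (sets := fun _ => Set.Iic θ) fun _ _ => measurableSet_Iic
    have hle (i : ι) : μ (X i ⁻¹' Set.Iic θ) = ν (Set.Iic θ) :=
      (hlaw i).measure_eq measurableSet_Iic
    simpa [Measure.real, hle] using congrArg ENNReal.toReal h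
  have hmeas : NullMeasurableSet (⋂ i, X i ⁻¹' Set.Iic θ) μ :=
    .iInter fun i => (hlaw i).aemeasurable.nullMeasurableSet_preimage measurableSet_Iic
  have hcompl : {ω | ∃ i, θ < X i ω} = (⋂ i, X i ⁻¹' Set.Iic θ)ᶜ := by ext; simp
  rw [hcompl, probReal_compl_eq_one_sub₀ hmeas, hnone]

end Independence

section Maximum

variable {Ω ι : Type*} [MeasurableSpace Ω] {μ : Measure Ω} {ν : Measure ℝ} {θ : ℝ}

lemma iSup_le_add_sum_posPart_sub [Fintype ι] [Nonempty ι] (x : ι → ℝ) (θ : ℝ) :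
    ⨆ i, x i ≤ θ + ∑ i, (x i - θ)⁺ := by
  refine ciSup_le fun i => ?_
  calc x i ≤ θ + (x i - θ)⁺ := by linarith [le_posPart (x i - θ)]
    _ ≤ θ + ∑ i, (x i - θ)⁺ := by
      gcongr
      exact Finset.single_le_sum (fun j _ => posPart_nonneg (x j - θ)) (Finset.mem_univ i)

lemma integrable_posPart_sub_of_iSup [Finite ι] [IsFiniteMeasure μ] {X : ι → Ω → ℝ} {i : ι}
    (hX : AEMeasurable (X i) μ) (hint : Integrable (fun ω => ⨆ i, X i ω) μ) (θ : ℝ) :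
    Integrable (fun ω => (X i ω - θ)⁺) μ := by
  refine (hint.sub (integrable_const θ)).pos_part.mono' ?_ (.of_forall fun ω => ?_)
  · exact (hX.sub_const θ).sup_const 0 |>.aestronglyMeasurable
  · rw [Real.norm_of_nonneg (posPart_nonneg _)]
    exact posPart_mono (sub_le_sub_right (le_ciSup (Set.finite_range fun i => X i ω).bddAbove i) θ)

lemma indicator_Ioi_sub_eq_posPart (θ x : ℝ) :
    (Set.Ioi θ).indicator (fun x => x - θ) x = (x - θ)⁺ := by
  by_cases h : θ < x
  · simp [h, h.le]
  · simp [h, not_lt.1 h]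

lemma integrableOn_Ioi_of_posPart_sub [IsFiniteMeasure ν]
    (h : Integrable (fun x => (x - θ)⁺) ν) : IntegrableOn (fun x => x) (Set.Ioi θ) ν := by
  simp only [← indicator_Ioi_sub_eq_posPart, integrable_indicator_iff measurableSet_Ioi] at h
  simpa [Pi.add_def] using h.add (integrableOn_const (C := θ) (s := Set.Ioi θ))

lemma integral_posPart_sub [IsFiniteMeasure ν] (h : Integrable (fun x => (x - θ)⁺) ν) :
    ∫ x, (x - θ)⁺ ∂ν = ∫ x in Set.Ioi θ, x ∂ν - ν.real (Set.Ioi θ) * θ := by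
  simp only [← indicator_Ioi_sub_eq_posPart]
  rw [integral_indicator measurableSet_Ioi,
    integral_sub (integrableOn_Ioi_of_posPart_sub h) (integrable_const θ), setIntegral_const,
    smul_eq_mul]

lemma integrable_posPart_sub_of_hasLaw [Finite ι] [IsFiniteMeasure μ] {X : ι → Ω → ℝ} {i : ι}
    (hlaw : HasLaw (X i) ν μ) (hint : Integrable (fun ω => ⨆ i, X i ω) μ) (θ : ℝ) :
    Integrable (fun x => (x - θ)⁺) ν := by
  rw [← hlaw.map_eq, integrable_map_measure (by fun_prop) hlaw.aemeasurable]
  exact integrable_posPart_sub_of_iSup hlaw.aemeasurable hint θ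

lemma integrableOn_Ioi_of_hasLaw [Finite ι] [IsFiniteMeasure μ] {X : ι → Ω → ℝ} {i : ι}
    (hlaw : HasLaw (X i) ν μ) (hint : Integrable (fun ω => ⨆ i, X i ω) μ) (θ : ℝ) :
    IntegrableOn (fun x => x) (Set.Ioi θ) ν :=
  have : IsFiniteMeasure ν := hlaw.isFiniteMeasure_iff.1 inferInstance
  integrableOn_Ioi_of_posPart_sub (integrable_posPart_sub_of_hasLaw hlaw hint θ)

lemma measureReal_Ioi_mul_integral_iSup_le [Fintype ι] [Nonempty ι] [IsProbabilityMeasure μ]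
    {X : ι → Ω → ℝ} (hlaw : ∀ i, HasLaw (X i) ν μ)
    (hint : Integrable (fun ω => ⨆ i, X i ω) μ)
    (hθ : Fintype.card ι * ν.real (Set.Ioi θ) ≤ 1) :
    ν.real (Set.Ioi θ) * ∫ ω, (⨆ i, X i ω) ∂μ ≤ ∫ x in Set.Ioi θ, x ∂ν := by
  obtain ⟨i₀⟩ := ‹Nonempty ι›
  have : IsProbabilityMeasure ν := (hlaw i₀).isProbabilityMeasure_iff.1 inferInstance
  have hexcess (i : ι) : Integrable (fun ω => (X i ω - θ)⁺) μ :=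
    integrable_posPart_sub_of_iSup (hlaw i).aemeasurable hint θ
  have hlaw_excess (i : ι) : ∫ ω, (X i ω - θ)⁺ ∂μ = ∫ x, (x - θ)⁺ ∂ν :=
    (hlaw i).integral_comp (f := fun x => (x - θ)⁺) (by fun_prop)
  set p := ν.real (Set.Ioi θ)
  set excess := ∫ x, (x - θ)⁺ ∂ν with excess_def
  have hmax : ∫ ω, (⨆ i, X i ω) ∂μ ≤ θ + Fintype.card ι * excess := calc
    _ ≤ ∫ ω, (θ + ∑ i, (X i ω - θ)⁺) ∂μ :=
        integral_mono hint ((integrable_const θ).add (integrable_finsetSum _ fun i _ => hexcess i))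
          fun ω => iSup_le_add_sum_posPart_sub (fun i => X i ω) θ
    _ = θ + Fintype.card ι * excess := by
        rw [integral_add (integrable_const θ) (integrable_finsetSum _ fun i _ => hexcess i),
          integral_finsetSum _ fun i _ => hexcess i]
        simp [hlaw_excess]
  calc p * ∫ ω, (⨆ i, X i ω) ∂μ
      ≤ p * (θ + Fintype.card ι * excess) := by gcongr
    _ = p * θ + Fintype.card ι * p * excess := by ring
    _ ≤ p * θ + 1 * excess := by gcongr
    _ = ∫ x in Set.Ioi θ, x ∂ν := by
        rw [excess_def, integral_posPart_sub (integrable_posPart_sub_of_hasLaw (hlaw i₀) hint θ)]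
        ring

end Maximum

section BestResponse

variable {Ω ι β : Type*} [LinearOrder β] {s : ι → Ω → ℝ × β} {θ : ℝ} {proposal : Ω → Option ι}

/-- A best response of the agent to the single-proposal mechanism with eligible set `{x > θ}`,
where `s i ω` is the pair of the principal's and the agent's utility for sample `i`. Ties are broken
arbitrarily, and no measurability in `ω` is imposed on the choice. -/
structure IsBestResponse (s : ι → Ω → ℝ × β) (θ : ℝ) (proposal : Ω → Option ι) : Prop where
  optimal : ∀ ω i, proposal ω = some i →
    θ < (s i ω).1 ∧ ∀ j, θ < (s j ω).1 → (s j ω).2 ≤ (s i ω).2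
  isSome : ∀ ω, (∃ i, θ < (s i ω).1) → (proposal ω).isSome

/-- The event that the agent strictly prefers sample `i` to every other eligible sample. Sample `i`
itself need not be eligible, which makes the event independent of the principal's value of `i`. -/
def favoredEvent (s : ι → Ω → ℝ × β) (θ : ℝ) (i : ι) : Set Ω :=
  {ω | ∀ j, j ≠ i → θ < (s j ω).1 → (s j ω).2 < (s i ω).2}

/-- The value `f x` of the accepted sample, and `0` if there is none: for `f = id` this is the
principal's utility, for `f = 1` the indicator of a proposal being made. -/
def acceptedValue (s : ι → Ω → ℝ × β) (proposal : Ω → Option ι) (f : ℝ → ℝ) (ω : Ω) : ℝ :=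
  ((proposal ω).map fun i => f (s i ω).1).getD 0

namespace IsBestResponse

lemma eq_some_iff (h : IsBestResponse s θ proposal) {ω : Ω}
    (hinj : Function.Injective fun i => (s i ω).2) {i : ι} :
    proposal ω = some i ↔ θ < (s i ω).1 ∧ ω ∈ favoredEvent s θ i := by
  constructor
  · intro hi
    obtain ⟨helig, hmax⟩ := h.optimal ω i hi
    exact ⟨helig, fun j hji hj => (hmax j hj).lt_of_ne (hinj.ne hji)⟩
  · rintro ⟨helig, hfav⟩
    obtain ⟨k, hk⟩ := Option.isSome_iff_exists.1 (h.isSome ω ⟨i, helig⟩)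
    obtain ⟨hk_elig, hk_max⟩ := h.optimal ω k hk
    by_cases hki : k = i
    · rwa [← hki]
    · exact absurd (hfav k hki hk_elig) (hk_max i helig).not_gt

lemma acceptedValue_eq_sum [Fintype ι] (h : IsBestResponse s θ proposal) {ω : Ω}
    (hinj : Function.Injective fun i => (s i ω).2) (f : ℝ → ℝ) :
    acceptedValue s proposal f ω =
      ∑ i, (favoredEvent s θ i).indicator (fun ω => (Set.Ioi θ).indicator f (s i ω).1) ω := by
  classical
  have hterm (i : ι) :
      (favoredEvent s θ i).indicator (fun ω => (Set.Ioi θ).indicator f (s i ω).1) ω =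
        if proposal ω = some i then f (s i ω).1 else 0 := by
    simp only [h.eq_some_iff hinj, Set.indicator_apply, Set.mem_Ioi, ← ite_and, and_comm]
  simp only [hterm]
  cases hp : proposal ω <;> simp [acceptedValue, hp]

lemma acceptedValue_one (h : IsBestResponse s θ proposal) :
    acceptedValue s proposal 1 = {ω | ∃ i, θ < (s i ω).1}.indicator 1 := by
  ext ω
  by_cases helig : ∃ i, θ < (s i ω).1
  · obtain ⟨i, hi⟩ := Option.isSome_iff_exists.1 (h.isSome ω helig)
    simp [acceptedValue, hi, helig]
  · have hnone : proposal ω = none :=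
      Option.eq_none_iff_forall_ne_some.2 fun i hi => helig ⟨i, (h.optimal ω i hi).1⟩
    simp [acceptedValue, hnone, helig]

end IsBestResponse

end BestResponse

section ThresholdMechanism

variable {Ω ι β : Type*} [LinearOrder β] [TopologicalSpace β] [OrderClosedTopology β]
  [SecondCountableTopology β] [MeasurableSpace β] [OpensMeasurableSpace β]
  {s : ι → Ω → ℝ × β} {θ : ℝ} {proposal : Ω → Option ι}

lemma measurableSet_comap_favoredEvent [Countable ι] (s : ι → Ω → ℝ × β) (θ : ℝ) (i : ι) :
    MeasurableSet[.comap (fun ω => ((s i ω).2, fun j : {j // j ≠ i} => s j ω)) inferInstance]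
      (favoredEvent s θ i) := by
  refine ⟨{q | ∀ j : {j // j ≠ i}, θ < (q.2 j).1 → (q.2 j).2 < q.1}, ?_, by
    ext; simp [favoredEvent]⟩
  have hlt (j : {j // j ≠ i}) :
      MeasurableSet {q : β × ({j // j ≠ i} → ℝ × β) | θ < (q.2 j).1 → (q.2 j).2 < q.1} :=
    (measurableSet_lt (by fun_prop) (by fun_prop)).imp
      (measurableSet_lt (by fun_prop) (by fun_prop))
  simpa only [Set.ofPred_forall] using MeasurableSet.iInter hlt

variable [MeasurableSpace Ω] {μ : Measure Ω} {ν : Measure ℝ}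

lemma measurableSet_favoredEvent [Countable ι] (hmeas : ∀ i, Measurable (s i)) (θ : ℝ) (i : ι) :
    MeasurableSet (favoredEvent s θ i) :=
  Measurable.comap_le (by fun_prop) _ (measurableSet_comap_favoredEvent s θ i)

lemma setIntegral_favoredEvent [Finite ι] (hmeas : ∀ i, Measurable (s i))
    (hindep : iIndepFun s μ) {i : ι} (hi : IndepFun (fun ω => (s i ω).1) (fun ω => (s i ω).2) μ)
    (hlaw : HasLaw (fun ω => (s i ω).1) ν μ) {f : ℝ → ℝ} (hf : AEStronglyMeasurable f ν) :
    ∫ ω in favoredEvent s θ i, f (s i ω).1 ∂μ = μ.real (favoredEvent s θ i) * ∫ x, f x ∂ν := by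
  rw [← hlaw.integral_comp hf]
  exact Indep.setIntegral_eq_mul (Measurable.comap_le (by fun_prop))
    (indepFun_fst_prodMk_snd_others hmeas hindep hi).symm hlaw.aemeasurable
    (measurableSet_comap_favoredEvent s θ i) (hlaw.map_eq ▸ hf)

namespace IsBestResponse

lemma acceptedValue_ae_eq_sum [Fintype ι] (h : IsBestResponse s θ proposal)
    (hmeas : ∀ i, Measurable (s i)) (hindep : iIndepFun s μ)
    (hatomless : ∀ i c, μ {ω | (s i ω).2 = c} = 0) (f : ℝ → ℝ) :
    acceptedValue s proposal f =ᵐ[μ] fun ω =>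
      ∑ i, (favoredEvent s θ i).indicator (fun ω => (Set.Ioi θ).indicator f (s i ω).1) ω := by
  have hinj := ae_injective_of_iIndepFun (fun i => (hmeas i).snd.aemeasurable)
    (hindep.comp (fun _ => Prod.snd) fun _ => measurable_snd) hatomless
  filter_upwards [hinj] with ω hω using h.acceptedValue_eq_sum hω f

lemma integrable_acceptedValue [Finite ι] (h : IsBestResponse s θ proposal)
    (hmeas : ∀ i, Measurable (s i)) (hindep : iIndepFun s μ)
    (hlaw : ∀ i, HasLaw (fun ω => (s i ω).1) ν μ)
    (hatomless : ∀ i c, μ {ω | (s i ω).2 = c} = 0) {f : ℝ → ℝ}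
    (hf : IntegrableOn f (Set.Ioi θ) ν) : Integrable (acceptedValue s proposal f) μ :=
  have := Fintype.ofFinite ι
  (integrable_finsetSum _ fun i _ => (integrable_comp_of_hasLaw (hlaw i)
    (hf.integrable_indicator measurableSet_Ioi)).indicator (measurableSet_favoredEvent hmeas θ i))
    |>.congr (h.acceptedValue_ae_eq_sum hmeas hindep hatomless f).symm

lemma integral_acceptedValue [Fintype ι] (h : IsBestResponse s θ proposal)
    (hmeas : ∀ i, Measurable (s i)) (hindep : iIndepFun s μ)
    (hlaw : ∀ i, HasLaw (fun ω => (s i ω).1) ν μ)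
    (hfst_snd : ∀ i, IndepFun (fun ω => (s i ω).1) (fun ω => (s i ω).2) μ)
    (hatomless : ∀ i c, μ {ω | (s i ω).2 = c} = 0) {f : ℝ → ℝ}
    (hf : IntegrableOn f (Set.Ioi θ) ν) :
    ∫ ω, acceptedValue s proposal f ω ∂μ =
      (∑ i, μ.real (favoredEvent s θ i)) * ∫ x in Set.Ioi θ, f x ∂ν := by
  have hfν : Integrable ((Set.Ioi θ).indicator f) ν := hf.integrable_indicator measurableSet_Ioi
  calc ∫ ω, acceptedValue s proposal f ω ∂μ
      = ∫ ω, ∑ i, (favoredEvent s θ i).indicator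
          (fun ω => (Set.Ioi θ).indicator f (s i ω).1) ω ∂μ :=
        integral_congr_ae (h.acceptedValue_ae_eq_sum hmeas hindep hatomless f)
    _ = ∑ i, ∫ ω in favoredEvent s θ i, (Set.Ioi θ).indicator f (s i ω).1 ∂μ := by
        rw [integral_finsetSum _ fun i _ => (integrable_comp_of_hasLaw (hlaw i) hfν).indicator
          (measurableSet_favoredEvent hmeas θ i)]
        simp only [integral_indicator (measurableSet_favoredEvent hmeas θ _)]
    _ = ∑ i, μ.real (favoredEvent s θ i) * ∫ x, (Set.Ioi θ).indicator f x ∂ν := by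
        simp only [setIntegral_favoredEvent hmeas hindep (hfst_snd _) (hlaw _)
          hfν.aestronglyMeasurable]
    _ = (∑ i, μ.real (favoredEvent s θ i)) * ∫ x in Set.Ioi θ, f x ∂ν := by
        rw [Finset.sum_mul, integral_indicator measurableSet_Ioi]

lemma sum_measureReal_favoredEvent_mul [Fintype ι] [IsFiniteMeasure ν]
    (h : IsBestResponse s θ proposal) (hmeas : ∀ i, Measurable (s i)) (hindep : iIndepFun s μ)
    (hlaw : ∀ i, HasLaw (fun ω => (s i ω).1) ν μ)
    (hfst_snd : ∀ i, IndepFun (fun ω => (s i ω).1) (fun ω => (s i ω).2) μ)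
    (hatomless : ∀ i c, μ {ω | (s i ω).2 = c} = 0) :
    (∑ i, μ.real (favoredEvent s θ i)) * ν.real (Set.Ioi θ) =
      1 - ν.real (Set.Iic θ) ^ Fintype.card ι := by
  have hfst : iIndepFun (fun i ω => (s i ω).1) μ :=
    hindep.comp (fun _ => Prod.fst) fun _ => measurable_fst
  have helig : MeasurableSet {ω | ∃ i, θ < (s i ω).1} := by
    simpa only [Set.ofPred_exists] using
      MeasurableSet.iUnion fun i => measurableSet_lt measurable_const (hmeas i).fst
  calc (∑ i, μ.real (favoredEvent s θ i)) * ν.real (Set.Ioi θ)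
      = ∫ ω, acceptedValue s proposal 1 ω ∂μ := by
        rw [h.integral_acceptedValue hmeas hindep hlaw hfst_snd hatomless
          (f := 1) (integrableOn_const (C := (1 : ℝ)))]
        simp
    _ = μ.real {ω | ∃ i, θ < (s i ω).1} := by
        rw [h.acceptedValue_one, integral_indicator_one helig]
    _ = 1 - ν.real (Set.Iic θ) ^ Fintype.card ι :=
        measureReal_exists_lt_eq_one_sub_pow hfst hlaw θ

lemma one_sub_pow_mul_integral_iSup_le [Fintype ι] [Nonempty ι]
    (h : IsBestResponse s θ proposal) (hmeas : ∀ i, Measurable (s i)) (hindep : iIndepFun s μ)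
    (hlaw : ∀ i, HasLaw (fun ω => (s i ω).1) ν μ)
    (hfst_snd : ∀ i, IndepFun (fun ω => (s i ω).1) (fun ω => (s i ω).2) μ)
    (hatomless : ∀ i c, μ {ω | (s i ω).2 = c} = 0)
    (hint : Integrable (fun ω => ⨆ i, (s i ω).1) μ)
    (hθ : Fintype.card ι * (1 - ν.real (Set.Iic θ)) ≤ 1) :
    (1 - ν.real (Set.Iic θ) ^ Fintype.card ι) * ∫ ω, (⨆ i, (s i ω).1) ∂μ ≤
      ∫ ω, acceptedValue s proposal id ω ∂μ := by
  obtain ⟨i₀⟩ := ‹Nonempty ι›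
  have := hindep.isProbabilityMeasure
  have : IsProbabilityMeasure ν := (hlaw i₀).isProbabilityMeasure_iff.1 inferInstance
  have hIoi : ν.real (Set.Ioi θ) = 1 - ν.real (Set.Iic θ) := by
    rw [← Set.compl_Iic, probReal_compl_eq_one_sub measurableSet_Iic]
  have hid : IntegrableOn id (Set.Ioi θ) ν := integrableOn_Ioi_of_hasLaw (hlaw i₀) hint θ
  rw [← h.sum_measureReal_favoredEvent_mul hmeas hindep hlaw hfst_snd hatomless,
    mul_assoc, h.integral_acceptedValue hmeas hindep hlaw hfst_snd hatomless hid]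
  gcongr
  exact measureReal_Ioi_mul_integral_iSup_le hlaw hint (hIoi ▸ hθ)

end IsBestResponse

lemma natCast_mul_one_sub_exp_neg_one_div_le (n : ℕ) :
    n * (1 - Real.exp (-1 / n)) ≤ 1 := by
  rcases eq_or_ne n 0 with rfl | hn
  · simp
  · calc n * (1 - Real.exp (-1 / n)) ≤ n * (1 / n : ℝ) := by
          gcongr
          linarith [Real.add_one_le_exp (-1 / n : ℝ), neg_div (n : ℝ) 1]
      _ = 1 := by field_simp

lemma exp_neg_one_div_pow_natCast {n : ℕ} (hn : n ≠ 0) :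
    Real.exp (-1 / n) ^ n = 1 / Real.exp 1 := by
  rw [← Real.exp_nat_mul, mul_div_cancel₀ _ (Nat.cast_ne_zero.2 hn), Real.exp_neg, one_div]

theorem delegation_one_minus_inv_e_general [Fintype ι] [Nonempty ι]
    (hmeas : ∀ i, Measurable (s i)) (hindep : iIndepFun s μ)
    (hlaw : ∀ i, HasLaw (fun ω => (s i ω).1) ν μ)
    (hfst_snd : ∀ i, IndepFun (fun ω => (s i ω).1) (fun ω => (s i ω).2) μ)
    (hatomless : ∀ i c, μ {ω | (s i ω).2 = c} = 0)
    (hint : Integrable (fun ω => ⨆ i, (s i ω).1) μ)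
    (hθ : ν.real (Set.Iic θ) = Real.exp (-1 / Fintype.card ι))
    (hproposal : IsBestResponse s θ proposal) :
    Integrable (acceptedValue s proposal id) μ ∧
      (1 - 1 / Real.exp 1) * ∫ ω, (⨆ i, (s i ω).1) ∂μ ≤
        ∫ ω, acceptedValue s proposal id ω ∂μ := by
  obtain ⟨i₀⟩ := ‹Nonempty ι›
  have := hindep.isProbabilityMeasure
  refine ⟨hproposal.integrable_acceptedValue hmeas hindep hlaw hatomless
    (integrableOn_Ioi_of_hasLaw (hlaw i₀) hint θ), ?_⟩
  rw [← exp_neg_one_div_pow_natCast (Fintype.card_ne_zero (α := ι)), ← hθ]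
  exact hproposal.one_sub_pow_mul_integral_iSup_le hmeas hindep hlaw hfst_snd hatomless
    hint (hθ ▸ natCast_mul_one_sub_exp_neg_one_div_le _)

end ThresholdMechanism

/-- Suppose the principal's and agent's utilities are independent:
the agent draws `n` i.i.d. samples `(x_1,y_1),…,(x_n,y_n)` from a distribution on
`[0,∞)×[0,∞)` where `x_i` and `y_i` are independent, `x_i` has continuous (atomless)
cumulative distribution function `F`, and the `y_i` are drawn from an arbitrary
atomless distribution; assume `E[max_i x_i]` is finite.  Let `θ` satisfy
`F(θ) = exp(−1/n)`.  Then the single-proposal mechanism with eligible set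
`{(x,y) : x > θ}`, under which the agent proposes the eligible sample with maximum
`y`-value (proposing nothing when no sample is eligible), guarantees the principal
expected utility at least `(1 − 1/e)·E[max_i x_i]`. -/
theorem delegation_one_minus_inv_e {Ω : Type*} [MeasurableSpace Ω]
    (μ : Measure Ω) [IsProbabilityMeasure μ]
    (n : ℕ) (hn : 0 < n) (s : Fin n → Ω → ℝ × ℝ)
    (hmeas : ∀ i, Measurable (s i))
    (hnonneg : ∀ i ω, 0 ≤ (s i ω).1 ∧ 0 ≤ (s i ω).2)
    (hindep : iIndepFun s μ)
    (hident : ∀ i, μ.map (s i) = μ.map (s ⟨0, hn⟩))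
    (hxy_indep : ∀ i, IndepFun (fun ω => (s i ω).1) (fun ω => (s i ω).2) μ)
    (hy_atomless : ∀ i (c : ℝ), μ {ω | (s i ω).2 = c} = 0)
    (hint_max : Integrable (fun ω => ⨆ i, (s i ω).1) μ)
    (F : ℝ → ℝ) (hF : ∀ t, F t = (μ {ω | (s ⟨0, hn⟩ ω).1 ≤ t}).toReal)
    (hFcont : Continuous F)
    (θ : ℝ) (hθ : F θ = Real.exp (-1 / n)) :
    ∀ proposal : Ω → Option (Fin n),
      (∀ ω i, proposal ω = some i →
        θ < (s i ω).1 ∧ ∀ j, θ < (s j ω).1 → (s j ω).2 ≤ (s i ω).2) →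
      (∀ ω, (∃ i, θ < (s i ω).1) → (proposal ω).isSome) →
      Integrable (fun ω => ((proposal ω).map fun i => (s i ω).1).getD 0) μ →
      (1 - 1 / Real.exp 1) * (∫ ω, (⨆ i, (s i ω).1) ∂μ)
        ≤ ∫ ω, ((proposal ω).map fun i => (s i ω).1).getD 0 ∂μ := by
  intro proposal hoptimal hsome _
  have : Nonempty (Fin n) := ⟨⟨0, hn⟩⟩
  have hlaw (i : Fin n) : HasLaw (fun ω => (s i ω).1) ((μ.map (s ⟨0, hn⟩)).map Prod.fst) μ :=
    ⟨(hmeas i).fst.aemeasurable, by rw [← hident i, Measure.map_map measurable_fst (hmeas i)]; rfl⟩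
  have hθ_law : ((μ.map (s ⟨0, hn⟩)).map Prod.fst).real (Set.Iic θ) =
      Real.exp (-1 / Fintype.card (Fin n)) := by
    rw [Fintype.card_fin, ← hθ, hF]
    exact ((hlaw ⟨0, hn⟩).measureReal_eq measurableSet_Iic).symm
  exact (delegation_one_minus_inv_e_general hmeas hindep hlaw hxy_indep hy_atomless hint_max
    hθ_law ⟨hoptimal, hsome⟩).2
end
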